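/- Let d ∈ {2,3}, let N ∈ ℕ, and let 0 < c < √2. Let ψ be a nontrivial finite energy solution of the slab problem on Ω_N with speed c (in particular ψ is not identically 1). Then sup_{x ∈ Ω_N} | 1 − |ψ(x)| | ≥ (2/5)(1 − c/√2). -/

import Mathlib

/-!
Suppose that `|1 - |ψ||` stays below `(2/5)(1 - c/√2)`. (The supremum in the statement is a genuine
one: by the Keller–Osserman type bound `SlabSolution.bounded`, `ψ` is bounded.) Then
`3|ψ|² - 1 ≥ c² + ε` for some `ε > 0`; in particular `ψ` does not vanish, and since the closed slab is
convex, the Poincaré lemma gives `ψ = exp (σ + iφ)` (`exists_log`). On each face `ψ = 1`, so `σ = 0`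
there, and `φ` is constant on each face; normalise `φ = 0` on the left face. The value of `φ` on the
right face must vanish too, because otherwise `∂₁φ` would have a nonzero mean over every truncated
slab `[-N, N] × [-R, R]^{d-1}`, contradicting finite energy (`jump_eq_zero`).

With `ρ = e^σ` and `η = 1 - ρ²` the equation reads
`Δσ = c ∂₁φ - |∇σ|² + |∇φ|² - η` and `Δφ = -c ∂₁σ - 2 ∇σ·∇φ`,
and the vector field `-η ∇σ + 2φ (ρ² ∇φ - (c/2) η e₁)` has divergence
`(1 + ρ²)|∇σ|² + η² + (3ρ² - 1)|∇φ|² - 2c η ∂₁φ`.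
As a quadratic form in `(η, ∇σ, ∇φ)` this is positive definite exactly because `3ρ² - 1` stays above
`c²` (`coercive`). The field vanishes on both faces, and it is bounded by the energy density plus
`φ²`, which is integrable over the slab by the Poincaré inequality (`poincare_slab`). Integrating
against cutoffs at scale `R` (`cutoff_identity`) therefore leaves only an `O(1/R)` error, and letting
`R → ∞` yields `η = 0`, `∇σ = 0`, `∇φ = 0` (`dens_eq_zero`). So `ψ` is a constant of modulus one
(`trivial_of_modulus`).

The dimension enters only through `d ≥ 2`. On the closed slab, derivatives are carried as continuous
one-forms (`S = dσ`, `P = dφ`) that agree with the actual derivatives in the interior, because the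
Fréchet derivative of `ψ` on the boundary is not determined by its values on the slab.
-/

open MeasureTheory Filter Complex Metric Topology

noncomputable section

abbrev Ed (d : ℕ) := EuclideanSpace ℝ (Fin d)

/-- Partial derivative of `ψ` in the `i`-th coordinate direction. -/
def pd {d : ℕ} (ψ : Ed d → ℂ) (i : Fin d) (x : Ed d) : ℂ :=
  fderiv ℝ ψ x (EuclideanSpace.single i 1)

/-- Laplacian of `ψ`. -/
def lap {d : ℕ} (ψ : Ed d → ℂ) (x : Ed d) : ℂ :=
  ∑ i : Fin d, fderiv ℝ (fun y => fderiv ℝ ψ y (EuclideanSpace.single i 1)) x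
      (EuclideanSpace.single i 1)

/-- The Gross–Pitaevskii traveling wave equation with speed `c` on `ℝ^d`:
`ic ∂_{x₁}ψ + Δψ + (1 - |ψ|²)ψ = 0`. -/
def GPeq {d : ℕ} [NeZero d] (c : ℝ) (ψ : Ed d → ℂ) : Prop :=
  ∀ x, Complex.I * (c : ℂ) * pd ψ 0 x + lap ψ x + (1 - (‖ψ x‖ : ℂ) ^ 2) * ψ x = 0

/-- `|∇ψ|²`. -/
def gradSq {d : ℕ} (ψ : Ed d → ℂ) (x : Ed d) : ℝ := ∑ i : Fin d, ‖pd ψ i x‖ ^ 2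

/-- Energy density `(1/2)|∇ψ|² + (1/4)(1 - |ψ|²)²`. -/
def eDen {d : ℕ} (ψ : Ed d → ℂ) (x : Ed d) : ℝ :=
  1 / 2 * gradSq ψ x + 1 / 4 * (1 - ‖ψ x‖ ^ 2) ^ 2

/-- Energy `E(ψ)`. -/
def energy {d : ℕ} (ψ : Ed d → ℂ) : ℝ := ∫ x, eDen ψ x

/-- Finite energy. -/
def FiniteEnergy {d : ℕ} (ψ : Ed d → ℂ) : Prop := Integrable (eDen ψ)

/-- Momentum `P(ψ) = -∫ ∂_{x₁}(Im ψ)(Re ψ - 1)`. -/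
def mom {d : ℕ} [NeZero d] (ψ : Ed d → ℂ) : ℝ :=
  -∫ x, (pd ψ 0 x).im * ((ψ x).re - 1)

/-- Lagrangian `I^c(ψ) = E(ψ) - c P(ψ)`. -/
def lagr {d : ℕ} [NeZero d] (c : ℝ) (ψ : Ed d → ℂ) : ℝ := energy ψ - c * mom ψ

/-- `ψ` is not a constant of modulus 1. -/
def Nontriv {d : ℕ} (ψ : Ed d → ℂ) : Prop := ¬∃ z : ℂ, ‖z‖ = 1 ∧ ψ = fun _ => z

/-- The quadratic form `Q` of the second variation of `I^c` at `ψ`: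
`Q(φ) = ∫ |∇φ|² - c⟨φ, i∂₁φ⟩ - (1-|ψ|²)|φ|² + 2⟨φ,ψ⟩²` with `⟨z₁,z₂⟩ = Re (z₁ conj z₂)`. -/
def Qform {d : ℕ} [NeZero d] (c : ℝ) (ψ φ : Ed d → ℂ) : ℝ :=
  ∫ x, (gradSq φ x - c * (φ x * (starRingEnd ℂ) (Complex.I * pd φ 0 x)).re
    - (1 - ‖ψ x‖ ^ 2) * ‖φ x‖ ^ 2 + 2 * ((φ x * (starRingEnd ℂ) (ψ x)).re) ^ 2)

/-- The Morse index of `ψ` is at most `m`: every subspace of smooth compactly supported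
functions on which `Q` is negative definite has dimension at most `m`. -/
def MorseIndexLE {d : ℕ} [NeZero d] (c : ℝ) (ψ : Ed d → ℂ) (m : ℕ) : Prop :=
  ∀ Y : Submodule ℝ (Ed d → ℂ),
    (∀ φ ∈ Y, ContDiff ℝ (⊤ : ℕ∞) φ ∧ HasCompactSupport φ) →
    (∀ φ ∈ Y, φ ≠ 0 → Qform c ψ φ < 0) → Module.rank ℝ Y ≤ m

/-- `C^k_loc` convergence: uniform convergence of all iterated derivatives on every
compact set. -/
def LocCk {d : ℕ} (ψn : ℕ → Ed d → ℂ) (ψ : Ed d → ℂ) : Prop :=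
  ∀ (k : ℕ) (K : Set (Ed d)), IsCompact K →
    TendstoUniformlyOn (fun n => iteratedFDeriv ℝ k (ψn n)) (iteratedFDeriv ℝ k ψ) atTop K

/-- The open slab `Ω_N = {x : -N < x₁ < N}`. -/
def slab (d N : ℕ) [NeZero d] : Set (Ed d) := {x | -(N : ℝ) < x 0 ∧ x 0 < N}

/-- The closed slab. -/
def slabCl (d N : ℕ) [NeZero d] : Set (Ed d) := {x | -(N : ℝ) ≤ x 0 ∧ x 0 ≤ N}

/-- The boundary of the slab `Ω_N`. -/
def slabBdry (d N : ℕ) [NeZero d] : Set (Ed d) := {x | x 0 = -(N : ℝ) ∨ x 0 = (N : ℝ)}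

/-- A finite energy solution of the slab problem on `Ω_N` with speed `c`. -/
def SlabSolution (d N : ℕ) [NeZero d] (c : ℝ) (ψ : Ed d → ℂ) : Prop :=
  ContDiffOn ℝ (⊤ : ℕ∞) ψ (slabCl d N) ∧
  (∀ x ∈ slab d N,
    Complex.I * (c : ℂ) * pd ψ 0 x + lap ψ x + (1 - (‖ψ x‖ : ℂ) ^ 2) * ψ x = 0) ∧
  (∀ x ∈ slabBdry d N, ψ x = 1) ∧
  IntegrableOn (eDen ψ) (slab d N)

/-- `ψ` is not a constant of modulus 1 on `Ω_N`. -/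
def SlabNontriv (d N : ℕ) [NeZero d] (ψ : Ed d → ℂ) : Prop :=
  ¬∃ z : ℂ, ‖z‖ = 1 ∧ ∀ x ∈ slab d N, ψ x = z

/-! ### Boxes and the divergence theorem -/

/-- The centred box `∏ [-bᵢ, bᵢ]` in `ℝ^d`. -/
def cube {d : ℕ} (b : Fin d → ℝ) : Set (Ed d) := {x | ∀ i, |x i| ≤ b i}

lemma isClosed_cube {d : ℕ} (b : Fin d → ℝ) : IsClosed (cube b) := by
  have : cube b = ⋂ i, {x : Ed d | |x i| ≤ b i} := by ext; simp [cube]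
  rw [this]
  exact isClosed_iInter fun i => isClosed_le (by fun_prop) continuous_const

lemma preimage_cube {d : ℕ} (b : Fin d → ℝ) :
    (WithLp.toLp 2 : (Fin d → ℝ) → Ed d) ⁻¹' cube b = Set.Icc (-b) b := by
  ext x
  simp only [cube, Set.mem_preimage, Set.mem_ofPred_eq, Set.mem_Icc, Pi.le_def, Pi.neg_apply,
    abs_le, forall_and]

lemma image_Icc_cube {d : ℕ} (b : Fin d → ℝ) :
    (WithLp.toLp 2 : (Fin d → ℝ) → Ed d) '' Set.Icc (-b) b = cube b := by
  rw [← preimage_cube, Set.image_preimage_eq]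
  exact (WithLp.toLp_surjective 2)

lemma isCompact_cube {d : ℕ} (b : Fin d → ℝ) : IsCompact (cube b) := by
  rw [← image_Icc_cube]
  exact isCompact_Icc.image (PiLp.continuous_toLp 2 _)

lemma measurableSet_cube {d : ℕ} (b : Fin d → ℝ) : MeasurableSet (cube b) :=
  (isClosed_cube b).measurableSet

lemma volume_cube {d : ℕ} (b : Fin d → ℝ) (hb : ∀ i, 0 ≤ b i) :
    volume.real (cube b) = ∏ i, (2 * b i) := by
  have h := (PiLp.volume_preserving_toLp (Fin d)).measure_preimage
    (measurableSet_cube b).nullMeasurableSet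
  have h2 := Real.volume_Icc_pi_toReal (a := -b) (b := b) (fun i => by
    have := hb i; simp only [Pi.neg_apply]; linarith)
  rw [Measure.real, ← h, preimage_cube, h2]
  refine Finset.prod_congr rfl fun i _ => ?_
  simp only [Pi.neg_apply]; ring

/-- The divergence theorem on a box for a vector field whose normal component vanishes on every
face. The divergence `D` is only prescribed in the interior. -/
lemma integral_div_eq_zero {n : ℕ} (b : Fin (n + 1) → ℝ) (hb : ∀ i, 0 ≤ b i)
    (F : Fin (n + 1) → Ed (n + 1) → ℝ) (F' : Fin (n + 1) → Ed (n + 1) → (Ed (n + 1) →L[ℝ] ℝ))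
    (D : Ed (n + 1) → ℝ)
    (hF : ∀ i, ContinuousOn (F i) (cube b))
    (hF' : ∀ x, (∀ i, |x i| < b i) → ∀ i, HasFDerivAt (F i) (F' i x) x)
    (hD : ∀ x, (∀ i, |x i| < b i) → ∑ i, F' i x (EuclideanSpace.single i 1) = D x)
    (hDc : ContinuousOn D (cube b))
    (h0 : ∀ i, ∀ x ∈ cube b, |x i| = b i → F i x = 0) :
    ∫ x in cube b, D x = 0 := by
  set e : (Fin (n + 1) → ℝ) →L[ℝ] Ed (n + 1) :=
    (PiLp.continuousLinearEquiv 2 ℝ (fun _ : Fin (n + 1) => ℝ)).symm.toContinuousLinearMap with he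
  have hee : ∀ y, e y = WithLp.toLp 2 y := fun y => rfl
  have hmap : Set.MapsTo e (Set.Icc (-b) b) (cube b) := fun y hy => by
    rw [hee]; rw [← preimage_cube] at hy; exact hy
  have hae : (Set.pi Set.univ fun i => Set.Ioo ((-b) i) (b i)) =ᵐ[volume] Set.Icc (-b) b :=
    Measure.univ_pi_Ioo_ae_eq_Icc
  have hint : ∀ y ∈ (Set.pi Set.univ fun i => Set.Ioo ((-b) i) (b i)), ∀ i, |(e y) i| < b i := by
    intro y hy i
    have := hy i (Set.mem_univ i)
    exact abs_lt.2 ⟨this.1, this.2⟩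
  have hDi : IntegrableOn (fun y => D (e y)) (Set.Icc (-b) b) :=
    (hDc.comp e.continuous.continuousOn hmap).integrableOn_compact isCompact_Icc
  have hmo : MeasurableSet (Set.pi Set.univ fun i => Set.Ioo ((-b) i) (b i)) :=
    MeasurableSet.univ_pi fun i => measurableSet_Ioo
  have hDeq : ∀ y ∈ (Set.pi Set.univ fun i => Set.Ioo ((-b) i) (b i)),
      (∑ i, ((F' i (e y)).comp e) (Pi.single i 1)) = D (e y) := by
    intro y hy
    rw [← hD _ (hint y hy)]
    refine Finset.sum_congr rfl fun i _ => ?_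
    simp only [ContinuousLinearMap.comp_apply, hee]
    simp
  have key := integral_divergence_of_hasFDerivAt_off_countable' (-b) b
    (fun i => by have := hb i; simp only [Pi.neg_apply]; linarith)
    (fun i y => F i (e y)) (fun i y => (F' i (e y)).comp e) ∅ Set.countable_empty
    (fun i => (hF i).comp e.continuous.continuousOn hmap)
    (fun y hy i => (hF' _ (hint y hy.1) i).comp y e.hasFDerivAt)
    (by
      rw [← integrableOn_congr_set_ae hae]
      refine IntegrableOn.congr_fun (f := fun y => D (e y)) ?_ (fun y hy => (hDeq y hy).symm) hmo
      rwa [integrableOn_congr_set_ae hae])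
  rw [← setIntegral_congr_set hae, setIntegral_congr_fun hmo hDeq, setIntegral_congr_set hae]
    at key
  have h3 : ∫ x in cube b, D x = ∫ y in Set.Icc (-b) b, D (e y) := by
    rw [← preimage_cube]
    exact ((PiLp.volume_preserving_toLp (Fin (n + 1))).setIntegral_preimage_emb
      (MeasurableEquiv.toLp 2 _).measurableEmbedding D (cube b)).symm
  rw [h3, key]
  refine Finset.sum_eq_zero fun i _ => ?_
  rw [setIntegral_eq_zero_of_forall_eq_zero, setIntegral_eq_zero_of_forall_eq_zero, sub_zero]
  · intro z hz
    refine h0 i _ (hmap ?_) ?_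
    · refine Fin.insertNth_mem_Icc.2 ⟨?_, hz⟩
      have := hb i
      exact ⟨le_rfl, (by simp only [Pi.neg_apply]; linarith : (-b) i ≤ b i)⟩
    · simp [hee, abs_of_nonneg (hb i)]
  · intro z hz
    refine h0 i _ (hmap ?_) ?_
    · refine Fin.insertNth_mem_Icc.2 ⟨?_, hz⟩
      have := hb i
      exact ⟨(by simp only [Pi.neg_apply]; linarith : (-b) i ≤ b i), le_rfl⟩
    · simp [hee, abs_of_nonneg (hb i)]

/-! ### Truncated slabs: the phase jump and the Poincaré inequality -/

/-- Half-widths of the truncated slab `[-N, N] × [-R, R]^n`. -/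
def hw (n N : ℕ) (R : ℝ) (i : Fin (n + 1)) : ℝ := if i = 0 then (N : ℝ) else R

/-- The `i`-th standard basis vector. -/
abbrev ei {n : ℕ} (i : Fin (n + 1)) : Ed (n + 1) := EuclideanSpace.single i 1

lemma hw_nonneg (n N : ℕ) {R : ℝ} (hR : 0 ≤ R) (i : Fin (n + 1)) : 0 ≤ hw n N R i := by
  unfold hw; split_ifs
  · positivity
  · exact hR

lemma cube_subset_slabCl (n N : ℕ) (R : ℝ) : cube (hw n N R) ⊆ slabCl (n + 1) N := by
  intro x hx
  have := hx 0
  simp only [hw, if_true, abs_le] at this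
  exact this

lemma slab_of_interior {n N : ℕ} {R : ℝ} {x : Ed (n + 1)} (hx : ∀ i, |x i| < hw n N R i) :
    x ∈ slab (n + 1) N := by
  have := hx 0
  simp only [hw, if_true, abs_lt] at this
  exact this

/-- If `φ` takes the constant values `0` and `k` on the two faces of the slab and `∂₁φ` is
square integrable, then `k = 0`: the mean of `∂₁φ` over every truncated slab is `k / 2N`, while the
volume of the truncated slabs is unbounded because there is at least one transversal direction. -/
lemma jump_eq_zero {n N : ℕ} (hN : 0 < N) (hn : 0 < n) (φ : Ed (n + 1) → ℝ)
    (P : Ed (n + 1) → (Ed (n + 1) →L[ℝ] ℝ)) (k M : ℝ)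
    (hφ : ContinuousOn φ (slabCl (n + 1) N)) (hP : ContinuousOn P (slabCl (n + 1) N))
    (hd : ∀ x ∈ slab (n + 1) N, HasFDerivAt φ (P x) x)
    (hl : ∀ x : Ed (n + 1), x 0 = -(N : ℝ) → φ x = 0)
    (hr : ∀ x : Ed (n + 1), x 0 = (N : ℝ) → φ x = k)
    (hM : ∀ R : ℝ, 0 < R → ∫ x in cube (hw n N R), (P x (ei 0)) ^ 2 ≤ M) : k = 0 := by
  have hNr : (0 : ℝ) < N := by exact_mod_cast hN
  set q : ℝ := k / (2 * N) with hq
  have hk : k = q * (2 * N) := by rw [hq]; field_simp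
  have hPi : ∀ R, ContinuousOn (fun x => P x (ei 0)) (cube (hw n N R)) := fun R =>
    (hP.mono (cube_subset_slabCl n N R)).clm_apply continuousOn_const
  have key : ∀ R : ℝ, 0 < R → q ^ 2 * volume.real (cube (hw n N R)) ≤ M := by
    intro R hR
    have h0 : ∫ x in cube (hw n N R), (P x (ei 0) - q) = 0 := by
      refine integral_div_eq_zero (hw n N R) (hw_nonneg n N hR.le)
        (fun i x => if i = 0 then φ x - q * (x 0 + N) else 0)
        (fun i x => if i = 0 then P x - q • (EuclideanSpace.proj 0 : Ed (n + 1) →L[ℝ] ℝ) else 0)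
        _ ?_ ?_ ?_ ?_ ?_
      · intro i
        by_cases hi : i = 0
        · simp only [hi, if_true]
          refine (hφ.mono (cube_subset_slabCl n N R)).sub ?_
          fun_prop
        · simp only [hi, if_false]; exact continuousOn_const
      · intro x hx i
        by_cases hi : i = 0
        · simp only [hi, if_true]
          refine (hd x (slab_of_interior hx)).sub ?_
          have : HasFDerivAt (fun y : Ed (n + 1) => y 0)
            (EuclideanSpace.proj 0 : Ed (n + 1) →L[ℝ] ℝ) x :=
            (EuclideanSpace.proj 0 : Ed (n + 1) →L[ℝ] ℝ).hasFDerivAt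
          exact (this.add_const _).const_mul q
        · simp only [hi, if_false]; exact hasFDerivAt_const _ _
      · intro x hx
        rw [Finset.sum_eq_single 0]
        · simp
        · intro i _ hi; simp [hi]
        · simp
      · exact (hPi R).sub continuousOn_const
      · intro i x hx hxi
        by_cases hi : i = 0
        · subst hi
          simp only [hw, if_true] at hxi ⊢
          rcases (abs_eq hNr.le).1 hxi with h | h
          · rw [hr x h, h, hk]; ring
          · rw [hl x h, h]; ring
        · simp [hi]
    have hi1 : IntegrableOn (fun x => (P x (ei 0)) ^ 2) (cube (hw n N R)) :=
      ((hPi R).pow 2).integrableOn_compact (isCompact_cube _)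
    have hi2 : IntegrableOn (fun x => P x (ei 0) - q) (cube (hw n N R)) :=
      ((hPi R).sub continuousOn_const).integrableOn_compact (isCompact_cube _)
    have hi3 : IntegrableOn (fun _ => q ^ 2) (cube (hw n N R)) :=
      (continuousOn_const).integrableOn_compact (isCompact_cube _)
    have h1 : ∫ x in cube (hw n N R), (2 * q * (P x (ei 0) - q) + q ^ 2)
        ≤ ∫ x in cube (hw n N R), (P x (ei 0)) ^ 2 := by
      refine setIntegral_mono ((hi2.const_mul _).add hi3) hi1 fun x => ?_
      dsimp only
      nlinarith [sq_nonneg (P x (ei 0) - q)]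
    rw [integral_add (hi2.const_mul _) hi3, integral_const_mul, h0, setIntegral_const] at h1
    have := hM R hR
    simp only [smul_eq_mul] at h1
    linarith
  have hvol : ∀ R : ℝ, 1 ≤ R → R ≤ volume.real (cube (hw n N R)) := by
    intro R hR
    rw [volume_cube _ (hw_nonneg n N (by linarith)), Fin.prod_univ_succ]
    have h1 : ∀ i : Fin n, 2 * hw n N R i.succ = 2 * R := fun i => by
      simp [hw, Fin.succ_ne_zero]
    simp only [h1, Finset.prod_const, Finset.card_univ, Fintype.card_fin]
    have h2 : (2 * R) ≤ (2 * R) ^ n := le_self_pow₀ (by linarith) hn.ne'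
    have h3 : (1 : ℝ) ≤ N := by exact_mod_cast hN
    have h4 : hw n N R 0 = N := by simp [hw]
    rw [h4]
    nlinarith
  have hq0 : q ^ 2 = 0 := by
    by_contra hne
    have hpos : 0 < q ^ 2 := lt_of_le_of_ne (sq_nonneg q) (Ne.symm hne)
    have hM0 : 0 ≤ M := by
      have := key 1 one_pos
      have h2 : 0 ≤ volume.real (cube (hw n N 1)) := measureReal_nonneg
      nlinarith
    have hR1 : 1 ≤ M / q ^ 2 + 1 := by have := div_nonneg hM0 hpos.le; linarith
    have h1 := key (M / q ^ 2 + 1) (by linarith)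
    have h2 := hvol _ hR1
    have h3 : q ^ 2 * (M / q ^ 2 + 1) ≤ M := (mul_le_mul_of_nonneg_left h2 hpos.le).trans h1
    have h4 : q ^ 2 * (M / q ^ 2 + 1) = M + q ^ 2 := by
      rw [mul_add, mul_one, mul_comm, div_mul_cancel₀ _ hne]
    linarith
  rw [hk, pow_eq_zero_iff two_ne_zero |>.1 hq0, zero_mul]

/-- The Poincaré inequality on truncated slabs, for functions vanishing on the two faces, obtained by
integrating the divergence of `x₁ φ² e₁`. -/
lemma poincare_slab {n N : ℕ} (φ : Ed (n + 1) → ℝ)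
    (P : Ed (n + 1) → (Ed (n + 1) →L[ℝ] ℝ)) (M : ℝ)
    (hφ : ContinuousOn φ (slabCl (n + 1) N)) (hP : ContinuousOn P (slabCl (n + 1) N))
    (hd : ∀ x ∈ slab (n + 1) N, HasFDerivAt φ (P x) x)
    (hb : ∀ x : Ed (n + 1), |x 0| = (N : ℝ) → φ x = 0)
    (hM : ∀ R : ℝ, 0 < R → ∫ x in cube (hw n N R), (P x (ei 0)) ^ 2 ≤ M) (R : ℝ) (hR : 0 < R) :
    ∫ x in cube (hw n N R), φ x ^ 2 ≤ 4 * N ^ 2 * M := by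
  have hsub := cube_subset_slabCl n N R
  have hPi : ContinuousOn (fun x => P x (ei 0)) (cube (hw n N R)) :=
    (hP.mono hsub).clm_apply continuousOn_const
  have hφc := hφ.mono hsub
  have hx0 : ContinuousOn (fun x : Ed (n + 1) => x 0) (cube (hw n N R)) := by fun_prop
  have hDc : ContinuousOn (fun x => φ x ^ 2 + 2 * x 0 * φ x * P x (ei 0)) (cube (hw n N R)) :=
    (hφc.pow 2).add (((continuousOn_const.mul hx0).mul hφc).mul hPi)
  have h0 : ∫ x in cube (hw n N R), (φ x ^ 2 + 2 * x 0 * φ x * P x (ei 0)) = 0 := by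
    refine integral_div_eq_zero (hw n N R) (hw_nonneg n N hR.le)
      (fun i x => if i = 0 then x 0 * (φ x * φ x) else 0)
      (fun i x => if i = 0 then x 0 • (φ x • P x + φ x • P x) +
        (φ x * φ x) • (EuclideanSpace.proj 0 : Ed (n + 1) →L[ℝ] ℝ) else 0)
      _ ?_ ?_ ?_ hDc ?_
    · intro i
      by_cases hi : i = 0
      · simp only [hi, if_true]
        exact hx0.mul (hφc.mul hφc)
      · simp only [hi, if_false]; exact continuousOn_const
    · intro x hx i
      by_cases hi : i = 0
      · simp only [hi, if_true]
        have h1 := hd x (slab_of_interior hx)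
        have : HasFDerivAt (fun y : Ed (n + 1) => y 0)
          (EuclideanSpace.proj 0 : Ed (n + 1) →L[ℝ] ℝ) x :=
          (EuclideanSpace.proj 0 : Ed (n + 1) →L[ℝ] ℝ).hasFDerivAt
        exact this.mul (h1.mul h1)
      · simp only [hi, if_false]; exact hasFDerivAt_const _ _
    · intro x hx
      rw [Finset.sum_eq_single 0]
      · simp; ring
      · intro i _ hi; simp [hi]
      · simp
    · intro i x hx hxi
      by_cases hi : i = 0
      · subst hi
        simp only [hw, if_true] at hxi ⊢
        rw [hb x hxi]; ring
      · simp [hi]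
  have hi1 : IntegrableOn (fun x => (P x (ei 0)) ^ 2) (cube (hw n N R)) :=
    (hPi.pow 2).integrableOn_compact (isCompact_cube _)
  have hi2 : IntegrableOn (fun x => φ x ^ 2) (cube (hw n N R)) :=
    (hφc.pow 2).integrableOn_compact (isCompact_cube _)
  have hi3 := hDc.integrableOn_compact (μ := volume) (isCompact_cube _)
  have h1 : ∫ x in cube (hw n N R), φ x ^ 2 ≤ ∫ x in cube (hw n N R),
      (2 * (φ x ^ 2 + 2 * x 0 * φ x * P x (ei 0)) + 4 * N ^ 2 * (P x (ei 0)) ^ 2) := by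
    refine setIntegral_mono_on hi2 ((hi3.const_mul _).add (hi1.const_mul _))
      (measurableSet_cube _) fun x hx => ?_
    have hx1 := hx 0
    simp only [hw, if_true] at hx1
    have hx2 : x 0 ^ 2 ≤ (N : ℝ) ^ 2 := sq_le_sq' (abs_le.1 hx1).1 (abs_le.1 hx1).2
    nlinarith [sq_nonneg (φ x + 2 * x 0 * P x (ei 0)),
      mul_le_mul_of_nonneg_right hx2 (sq_nonneg (P x (ei 0)))]
  rw [integral_add (hi3.const_mul _) (hi1.const_mul _), integral_const_mul, integral_const_mul,
    h0] at h1
  have h2 := mul_le_mul_of_nonneg_left (hM R hR) (by positivity : (0 : ℝ) ≤ 4 * N ^ 2)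
  linarith

/-! ### The integral identity -/

/-- Pointwise coercivity: the divergence `dvg` dominates a multiple of the density `dens` as soon as
`3ρ² - 1` stays above `c²`. Here `r = ρ²`, `s2 = |∇σ|²`, `p2 = |∇φ|²` and `p0 = ∂₁φ`. -/
lemma coercive {c ε r s2 p2 p0 : ℝ} (hε : 0 < ε) (hs : 0 ≤ s2) (_ : 0 ≤ r)
    (hp : p0 ^ 2 ≤ p2) (h : c ^ 2 + ε ≤ 3 * r - 1) :
    ε / (1 + c ^ 2 + ε) * ((1 - r) ^ 2 + s2 + p2) ≤
      (1 + r) * s2 + (1 - r) ^ 2 + (3 * r - 1) * p2 - 2 * c * (1 - r) * p0 := by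
  have hden : 0 < 1 + c ^ 2 + ε := by positivity
  set κ := ε / (1 + c ^ 2 + ε) with hκ
  have hκ0 : 0 < κ := by positivity
  have hκe : κ * (1 + c ^ 2 + ε) = ε := by rw [hκ]; field_simp
  have hκ1 : κ < 1 := by rw [hκ, div_lt_one hden]; nlinarith [sq_nonneg c]
  have hp2 : 0 ≤ p2 := (sq_nonneg _).trans hp
  have h1 : κ * s2 ≤ (1 + r) * s2 := mul_le_mul_of_nonneg_right (by linarith) hs
  have h2 : (c ^ 2 + ε) * p2 ≤ (3 * r - 1) * p2 := mul_le_mul_of_nonneg_right h hp2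
  have hce : κ ≤ c ^ 2 + ε := by nlinarith [sq_nonneg c]
  have h3 : (c ^ 2 + ε - κ) * p0 ^ 2 ≤ (c ^ 2 + ε - κ) * p2 :=
    mul_le_mul_of_nonneg_left hp (by linarith)
  -- nonnegativity of the form `(1 - κ)η² - 2cηp0 + (c² + ε - κ)p0²` comes down to its discriminant
  have h4 : c ^ 2 ≤ (1 - κ) * (c ^ 2 + ε - κ) := by nlinarith [sq_nonneg κ]
  have h5 : 0 ≤ (1 - κ) * ((1 - κ) * (1 - r) ^ 2 + (c ^ 2 + ε - κ) * p0 ^ 2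
      - 2 * c * (1 - r) * p0) := by
    nlinarith [sq_nonneg ((1 - κ) * (1 - r) - c * p0),
      mul_le_mul_of_nonneg_right h4 (sq_nonneg p0)]
  have h6 := nonneg_of_mul_nonneg_right h5 (by linarith)
  nlinarith

section Core

variable {n N : ℕ} {c ε M : ℝ} {σ φ : Ed (n + 1) → ℝ}
  {S P : Ed (n + 1) → (Ed (n + 1) →L[ℝ] ℝ)}

/-- `i`-th component of the vector field `-η∇σ + 2φ(ρ²∇φ - (c/2)η e₁)`,
where `ρ = e^σ`, `η = 1 - ρ²`. -/
def fld (c : ℝ) (σ φ : Ed (n + 1) → ℝ) (S P : Ed (n + 1) → (Ed (n + 1) →L[ℝ] ℝ))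
    (i : Fin (n + 1)) (x : Ed (n + 1)) : ℝ :=
  -(1 - Real.exp (2 * σ x)) * S x (ei i) +
    2 * φ x * (Real.exp (2 * σ x) * P x (ei i) -
      c / 2 * (if i = 0 then 1 else 0) * (1 - Real.exp (2 * σ x)))

/-- The divergence of `fld` when `σ`, `φ` solve the equations of `cutoff_identity`; it is a quadratic
form in `(η, ∇σ, ∇φ)`. -/
def dvg (c : ℝ) (σ : Ed (n + 1) → ℝ) (S P : Ed (n + 1) → (Ed (n + 1) →L[ℝ] ℝ))
    (x : Ed (n + 1)) : ℝ :=
  (1 + Real.exp (2 * σ x)) * ∑ i, S x (ei i) ^ 2 + (1 - Real.exp (2 * σ x)) ^ 2 +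
    (3 * Real.exp (2 * σ x) - 1) * ∑ i, P x (ei i) ^ 2 -
    2 * c * (1 - Real.exp (2 * σ x)) * P x (ei 0)

/-- The density `η² + |∇σ|² + |∇φ|²`. -/
def dens (σ : Ed (n + 1) → ℝ) (S P : Ed (n + 1) → (Ed (n + 1) →L[ℝ] ℝ))
    (x : Ed (n + 1)) : ℝ :=
  (1 - Real.exp (2 * σ x)) ^ 2 + ∑ i, S x (ei i) ^ 2 + ∑ i, P x (ei i) ^ 2

lemma dens_nonneg (x : Ed (n + 1)) : 0 ≤ dens σ S P x := by
  unfold dens; positivity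

lemma continuousOn_dens {A : Set (Ed (n + 1))} (hσ : ContinuousOn σ A) (hS : ContinuousOn S A)
    (hP : ContinuousOn P A) : ContinuousOn (dens σ S P) A := by
  unfold dens; fun_prop

lemma continuousOn_dvg {A : Set (Ed (n + 1))} (hσ : ContinuousOn σ A) (hS : ContinuousOn S A)
    (hP : ContinuousOn P A) : ContinuousOn (dvg c σ S P) A := by
  unfold dvg; fun_prop

lemma continuousOn_fld {A : Set (Ed (n + 1))} (hσ : ContinuousOn σ A) (hφ : ContinuousOn φ A)
    (hS : ContinuousOn S A) (hP : ContinuousOn P A) (i : Fin (n + 1)) :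
    ContinuousOn (fld c σ φ S P i) A := by
  unfold fld; fun_prop

/-- The integrated identity: the divergence theorem for `χ • fld`, with a cutoff `χ` that vanishes on
the lateral faces. On the two faces of the slab the field itself vanishes, as `η = φ = 0` there. The
hypotheses `eqS` and `eqP` are the real and imaginary parts of the equation for `ψ = e^{σ + iφ}`, with
`S = ∇σ` and `P = ∇φ`. -/
lemma cutoff_identity
    (hσc : ContinuousOn σ (slabCl (n + 1) N)) (hφc : ContinuousOn φ (slabCl (n + 1) N))
    (hSc : ContinuousOn S (slabCl (n + 1) N)) (hPc : ContinuousOn P (slabCl (n + 1) N))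
    (hσ : ∀ x ∈ slab (n + 1) N, HasFDerivAt σ (S x) x)
    (hφ : ∀ x ∈ slab (n + 1) N, HasFDerivAt φ (P x) x)
    (hS : ∀ x ∈ slab (n + 1) N, DifferentiableAt ℝ S x)
    (hP : ∀ x ∈ slab (n + 1) N, DifferentiableAt ℝ P x)
    (eqS : ∀ x ∈ slab (n + 1) N, ∑ i, fderiv ℝ S x (ei i) (ei i) =
      c * P x (ei 0) - ∑ i, S x (ei i) ^ 2 + ∑ i, P x (ei i) ^ 2 - (1 - Real.exp (2 * σ x)))
    (eqP : ∀ x ∈ slab (n + 1) N, ∑ i, fderiv ℝ P x (ei i) (ei i) =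
      - c * S x (ei 0) - 2 * ∑ i, S x (ei i) * P x (ei i))
    (hσb : ∀ x : Ed (n + 1), |x 0| = (N : ℝ) → σ x = 0)
    (hφb : ∀ x : Ed (n + 1), |x 0| = (N : ℝ) → φ x = 0)
    {R : ℝ} (hR : 0 < R) {χ : Ed (n + 1) → ℝ} (hχ : ContDiff ℝ 1 χ)
    (hχ0 : ∀ x, R ≤ ‖x‖ → χ x = 0) :
    ∫ x in cube (hw n N R),
      (χ x * dvg c σ S P x + ∑ i, fderiv ℝ χ x (ei i) * fld c σ φ S P i x) = 0 := by
  have hsub := cube_subset_slabCl n N R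
  have hχ' : Continuous (fderiv ℝ χ) := hχ.continuous_fderiv one_ne_zero
  have hχc := hχ.continuous
  have hfld := fun i => continuousOn_fld (c := c) (hσc.mono hsub) (hφc.mono hsub)
    (hSc.mono hsub) (hPc.mono hsub) i
  have hdvg := continuousOn_dvg (c := c) (hσc.mono hsub) (hSc.mono hsub) (hPc.mono hsub)
  have hdiff : ∀ x ∈ slab (n + 1) N, ∀ i, HasFDerivAt (fld c σ φ S P i)
      ((-(1 - Real.exp (2 * σ x))) • ((fderiv ℝ S x).flip (ei i)) +
        (S x (ei i)) • ((2 * Real.exp (2 * σ x)) • S x) +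
        ((2 * φ x) • (Real.exp (2 * σ x) • ((fderiv ℝ P x).flip (ei i)) +
          (P x (ei i)) • ((2 * Real.exp (2 * σ x)) • S x) +
          (c / 2 * (if i = 0 then 1 else 0) * (2 * Real.exp (2 * σ x))) • S x) +
        (Real.exp (2 * σ x) * P x (ei i) -
          c / 2 * (if i = 0 then 1 else 0) * (1 - Real.exp (2 * σ x))) • ((2 : ℝ) • P x))) x := by
    intro x hx i
    have h1 : HasFDerivAt (fun y => Real.exp (2 * σ y)) ((2 * Real.exp (2 * σ x)) • S x) x := by
      refine (((hσ x hx).const_mul 2).exp).congr_fderiv ?_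
      rw [smul_smul, mul_comm]
    have h2 : HasFDerivAt (fun y => S y (ei i)) ((fderiv ℝ S x).flip (ei i)) x := by
      refine ((hS x hx).hasFDerivAt.clm_apply (hasFDerivAt_const (ei i) x)).congr_fderiv ?_
      ext v; simp
    have h3 : HasFDerivAt (fun y => P y (ei i)) ((fderiv ℝ P x).flip (ei i)) x := by
      refine ((hP x hx).hasFDerivAt.clm_apply (hasFDerivAt_const (ei i) x)).congr_fderiv ?_
      ext v; simp
    have h4 : HasFDerivAt (fun y => 1 - Real.exp (2 * σ y))
        (-((2 * Real.exp (2 * σ x)) • S x)) x := h1.const_sub 1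
    have h5 := (h4.neg.mul h2).add (((hφ x hx).const_mul 2).mul
      ((h1.mul h3).sub (h4.const_mul (c / 2 * (if i = 0 then 1 else 0)))))
    refine h5.congr_fderiv ?_
    by_cases hi : i = 0
    · ext v
      simp [hi]
      left; ring
    · ext v
      simp [hi]
  refine integral_div_eq_zero (hw n N R) (hw_nonneg n N hR.le)
    (fun i x => χ x * fld c σ φ S P i x)
    (fun i x => χ x • fderiv ℝ (fld c σ φ S P i) x + fld c σ φ S P i x • fderiv ℝ χ x)
    _ ?_ ?_ ?_ ?_ ?_
  · intro i
    exact hχc.continuousOn.mul (hfld i)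
  · intro x hx i
    have h1 := hdiff x (slab_of_interior hx) i
    exact ((hχ.differentiable one_ne_zero) x).hasFDerivAt.mul h1.differentiableAt.hasFDerivAt
  · intro x hx
    have hx' := slab_of_interior hx
    have e1 := eqS x hx'
    have e2 := eqP x hx'
    set r := Real.exp (2 * σ x) with hr
    have hsum : ∑ i, fderiv ℝ (fld c σ φ S P i) x (ei i) = dvg c σ S P x := by
      have : ∀ i, fderiv ℝ (fld c σ φ S P i) x (ei i) =
          -(1 - r) * (fderiv ℝ S x (ei i) (ei i)) + 2 * r * S x (ei i) ^ 2
          + 2 * φ x * r * (fderiv ℝ P x (ei i) (ei i))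
          + 4 * φ x * r * (S x (ei i) * P x (ei i)) + 2 * r * P x (ei i) ^ 2
          + (if i = 0 then (2 * φ x * c * r * S x (ei i) - c * (1 - r) * P x (ei i)) else 0) := by
        intro i
        rw [(hdiff x hx' i).fderiv]
        by_cases hi : i = 0
        · simp [hi, ← hr]; ring
        · simp [hi, ← hr]; ring
      simp only [this, Finset.sum_add_distrib, ← Finset.mul_sum, e1, e2, dvg, ← hr,
        Finset.sum_ite_eq', Finset.mem_univ, if_true]
      ring
    rw [← hsum, Finset.mul_sum, ← Finset.sum_add_distrib]
    refine Finset.sum_congr rfl fun i _ => ?_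
    simp; ring
  · have := hχ'.continuousOn (s := cube (hw n N R))
    have := hχc.continuousOn (s := cube (hw n N R))
    refine (this.mul hdvg).add (continuousOn_finsetSum _ fun i _ => ?_)
    exact ContinuousOn.mul (hχ'.clm_apply continuous_const).continuousOn (hfld i)
  · intro i x hx hxi
    by_cases hi : i = 0
    · subst hi
      simp only [hw, if_true] at hxi
      simp [fld, hσb x hxi, hφb x hxi]
    · simp only [hw, hi, if_false] at hxi
      rw [hχ0 x, zero_mul]
      rw [← hxi]
      exact PiLp.norm_apply_le x i

/-! ### Vanishing of the energy density -/

/-- The field is quadratically small, so its lateral flux is controlled by the energy and, through the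
Poincaré inequality, by `∫ φ²`. -/
lemma abs_fld_le (hc0 : 0 ≤ c) (hc2 : c ≤ 2) (i : Fin (n + 1)) (x : Ed (n + 1))
    (hr : Real.exp (2 * σ x) ≤ 4) :
    |fld c σ φ S P i x| ≤ 5 * (dens σ S P x + φ x ^ 2) := by
  have hs : S x (ei i) ^ 2 ≤ ∑ j, S x (ei j) ^ 2 :=
    Finset.single_le_sum (f := fun j => S x (ei j) ^ 2) (fun j _ => sq_nonneg _) (Finset.mem_univ i)
  have hp : P x (ei i) ^ 2 ≤ ∑ j, P x (ei j) ^ 2 :=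
    Finset.single_le_sum (f := fun j => P x (ei j) ^ 2) (fun j _ => sq_nonneg _) (Finset.mem_univ i)
  have hr0 := Real.exp_pos (2 * σ x)
  unfold fld dens
  set r := Real.exp (2 * σ x)
  set s := S x (ei i)
  set p := P x (ei i)
  set δ : ℝ := if i = 0 then 1 else 0 with hδ
  have hδ0 : 0 ≤ δ ∧ δ ≤ 1 := by rw [hδ]; split_ifs <;> norm_num
  have h1 : |-(1 - r) * s| ≤ (1 - r) ^ 2 + s ^ 2 := by
    rw [abs_le]; constructor <;> nlinarith [sq_nonneg (1 - r + s), sq_nonneg (1 - r - s)]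
  have h2 : |2 * φ x * (r * p)| ≤ 4 * (φ x ^ 2 + p ^ 2) := by
    have : |2 * φ x * p| ≤ φ x ^ 2 + p ^ 2 := by
      rw [abs_le]; constructor <;> nlinarith [sq_nonneg (φ x + p), sq_nonneg (φ x - p)]
    calc |2 * φ x * (r * p)| = r * |2 * φ x * p| := by
          rw [← abs_of_pos hr0, ← abs_mul, abs_of_pos hr0]; congr 1; ring
      _ ≤ 4 * (φ x ^ 2 + p ^ 2) := by gcongr
  have h3 : |2 * φ x * (c / 2 * δ * (1 - r))| ≤ φ x ^ 2 + (1 - r) ^ 2 := by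
    have h4 : |2 * φ x * (1 - r)| ≤ φ x ^ 2 + (1 - r) ^ 2 := by
      rw [abs_le]; constructor <;> nlinarith [sq_nonneg (φ x + (1 - r)), sq_nonneg (φ x - (1 - r))]
    have h5 : 0 ≤ c / 2 * δ := mul_nonneg (by linarith) hδ0.1
    have h6 : c / 2 * δ ≤ 1 := mul_le_one₀ (by linarith) hδ0.1 hδ0.2
    calc |2 * φ x * (c / 2 * δ * (1 - r))| = (c / 2 * δ) * |2 * φ x * (1 - r)| := by
          conv_rhs => rw [← abs_of_nonneg h5, ← abs_mul]
          congr 1; ring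
      _ ≤ 1 * (φ x ^ 2 + (1 - r) ^ 2) := by gcongr
      _ = _ := one_mul _
  have h7 : -(1 - r) * s + 2 * φ x * (r * p - c / 2 * δ * (1 - r)) =
      -(1 - r) * s + 2 * φ x * (r * p) - 2 * φ x * (c / 2 * δ * (1 - r)) := by ring
  rw [h7]
  have h8 := abs_sub (-(1 - r) * s + 2 * φ x * (r * p)) (2 * φ x * (c / 2 * δ * (1 - r)))
  have h9 := abs_add_le (-(1 - r) * s) (2 * φ x * (r * p))
  have h10 := sq_nonneg (1 - r)
  have h11 := sq_nonneg s
  have h12 := sq_nonneg p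
  linarith

/-- A fixed profile, rescaled, gives cutoffs equal to `1` on the ball of radius `R`, vanishing
outside radius `2R`, with gradient `O(1/R)`. -/
lemma exists_cutoff (n : ℕ) : ∃ K : ℝ, 0 ≤ K ∧ ∀ R : ℝ, 0 < R → ∃ χ : Ed (n + 1) → ℝ,
    ContDiff ℝ 1 χ ∧ (∀ x, 2 * R ≤ ‖x‖ → χ x = 0) ∧ (∀ x, ‖x‖ ≤ R → χ x = 1) ∧
    (∀ x, 0 ≤ χ x) ∧ ∀ x i, |fderiv ℝ χ x (ei i)| ≤ K / R := by
  let f : ContDiffBump (0 : Ed (n + 1)) := ⟨1, 2, one_pos, one_lt_two⟩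
  have hf : ContDiff ℝ 1 f := f.contDiff
  have hc : Continuous (fderiv ℝ f) := hf.continuous_fderiv one_ne_zero
  obtain ⟨K, hK⟩ := (f.hasCompactSupport.fderiv (𝕜 := ℝ)).exists_bound_of_continuous hc
  refine ⟨K, (norm_nonneg _).trans (hK 0), fun R hR => ⟨fun x => f (R⁻¹ • x), ?_, ?_, ?_, ?_, ?_⟩⟩
  · exact hf.comp (contDiff_const_smul _)
  · intro x hx
    apply f.zero_of_le_dist
    rw [dist_zero_right, norm_smul, norm_inv, Real.norm_of_nonneg hR.le]
    change (2 : ℝ) ≤ _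
    rw [inv_mul_eq_div, le_div_iff₀ hR]; exact hx
  · intro x hx
    apply f.one_of_mem_closedBall
    rw [mem_closedBall_zero_iff, norm_smul, norm_inv, Real.norm_of_nonneg hR.le]
    change _ ≤ (1 : ℝ)
    rw [inv_mul_eq_div, div_le_iff₀ hR]; linarith
  · intro x; exact f.nonneg
  · intro x i
    have ha : HasFDerivAt f (fderiv ℝ f (R⁻¹ • x)) (R⁻¹ • x) :=
      (hf.differentiable one_ne_zero _).hasFDerivAt
    have hb : HasFDerivAt (fun x => R⁻¹ • x) (R⁻¹ • ContinuousLinearMap.id ℝ (Ed (n + 1))) x :=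
      (hasFDerivAt_id x).const_smul R⁻¹
    have h1 : HasFDerivAt (fun x => f (R⁻¹ • x))
        ((fderiv ℝ f (R⁻¹ • x)).comp (R⁻¹ • ContinuousLinearMap.id ℝ (Ed (n + 1)))) x :=
      HasFDerivAt.comp (g := ⇑f) x ha hb
    rw [h1.fderiv]
    simp only [ContinuousLinearMap.comp_apply, smul_apply,
      ContinuousLinearMap.id_apply, map_smul, smul_eq_mul, abs_mul, abs_inv, abs_of_pos hR]
    rw [inv_mul_eq_div]
    gcongr
    have := (fderiv ℝ f (R⁻¹ • x)).le_of_opNorm_le (hK _) (ei i)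
    simpa using this

lemma cube_mono {R R' : ℝ} (h : R ≤ R') : cube (hw n N R) ⊆ cube (hw n N R') := by
  intro x hx i
  refine (hx i).trans ?_
  unfold hw; split_ifs
  · exact le_rfl
  · exact h

/-- Rigidity: if `dens` has bounded integrals over the truncated slabs and `3ρ² - 1 ≥ c² + ε`, then
`dens` vanishes identically. -/
lemma dens_eq_zero
    (hσc : ContinuousOn σ (slabCl (n + 1) N)) (hφc : ContinuousOn φ (slabCl (n + 1) N))
    (hSc : ContinuousOn S (slabCl (n + 1) N)) (hPc : ContinuousOn P (slabCl (n + 1) N))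
    (hσ : ∀ x ∈ slab (n + 1) N, HasFDerivAt σ (S x) x)
    (hφ : ∀ x ∈ slab (n + 1) N, HasFDerivAt φ (P x) x)
    (hS : ∀ x ∈ slab (n + 1) N, DifferentiableAt ℝ S x)
    (hP : ∀ x ∈ slab (n + 1) N, DifferentiableAt ℝ P x)
    (eqS : ∀ x ∈ slab (n + 1) N, ∑ i, fderiv ℝ S x (ei i) (ei i) =
      c * P x (ei 0) - ∑ i, S x (ei i) ^ 2 + ∑ i, P x (ei i) ^ 2 - (1 - Real.exp (2 * σ x)))
    (eqP : ∀ x ∈ slab (n + 1) N, ∑ i, fderiv ℝ P x (ei i) (ei i) =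
      - c * S x (ei 0) - 2 * ∑ i, S x (ei i) * P x (ei i))
    (hσb : ∀ x : Ed (n + 1), |x 0| = (N : ℝ) → σ x = 0)
    (hφb : ∀ x : Ed (n + 1), |x 0| = (N : ℝ) → φ x = 0)
    (hc0 : 0 ≤ c) (hc2 : c ≤ 2) (hε : 0 < ε)
    (hlow : ∀ x ∈ slabCl (n + 1) N, c ^ 2 + ε ≤ 3 * Real.exp (2 * σ x) - 1)
    (hup : ∀ x ∈ slabCl (n + 1) N, Real.exp (2 * σ x) ≤ 4)
    (hM : ∀ R : ℝ, 0 < R → ∫ x in cube (hw n N R), dens σ S P x ≤ M) :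
    ∀ x ∈ slab (n + 1) N, dens σ S P x = 0 := by
  obtain ⟨K, hK0, hK⟩ := exists_cutoff n
  have hsub := cube_subset_slabCl n N
  have hdens : ∀ R, ContinuousOn (dens σ S P) (cube (hw n N R)) := fun R =>
    continuousOn_dens (hσc.mono (hsub R)) (hSc.mono (hsub R)) (hPc.mono (hsub R))
  have hdensi : ∀ R, IntegrableOn (dens σ S P) (cube (hw n N R)) := fun R =>
    (hdens R).integrableOn_compact (isCompact_cube _)
  have hφ2i : ∀ R, IntegrableOn (fun x => φ x ^ 2) (cube (hw n N R)) := fun R =>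
    ((hφc.mono (hsub R)).pow 2).integrableOn_compact (isCompact_cube _)
  have hφ2 : ∀ R, 0 < R → ∫ x in cube (hw n N R), φ x ^ 2 ≤ 4 * N ^ 2 * M := by
    refine fun R hR => poincare_slab φ P M hφc hPc hφ hφb (fun R hR => ?_) R hR
    refine le_trans (setIntegral_mono_on ?_ (hdensi R) (measurableSet_cube _) fun x _ => ?_)
      (hM R hR)
    · exact (((hPc.mono (hsub R)).clm_apply continuousOn_const).pow 2).integrableOn_compact
        (isCompact_cube _)
    · have h1 : P x (ei 0) ^ 2 ≤ ∑ j, P x (ei j) ^ 2 :=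
        Finset.single_le_sum (f := fun j => P x (ei j) ^ 2) (fun j _ => sq_nonneg _)
          (Finset.mem_univ 0)
      have h2 : 0 ≤ ∑ i, S x (ei i) ^ 2 := by positivity
      unfold dens
      linarith [sq_nonneg (1 - Real.exp (2 * σ x))]
  set κ := ε / (1 + c ^ 2 + ε) with hκ
  have hκ0 : 0 < κ := by positivity
  set B := 5 * ((n + 1 : ℕ) : ℝ) * K * (M + 4 * N ^ 2 * M) with hB
  -- the main estimate: the density on large boxes is `O(1/R)`
  have key : ∀ R : ℝ, 0 < R → ∀ R0 : ℝ, R0 ≤ 2 * R →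
      (∀ x ∈ cube (hw n N R0), ‖x‖ ≤ R) →
      κ * ∫ x in cube (hw n N R0), dens σ S P x ≤ B / R := by
    intro R hR R0 hR0 hball
    obtain ⟨χ, hχ, hχ0, hχ1, hχn, hχd⟩ := hK R hR
    have h2R : 0 < 2 * R := by linarith
    have hid := cutoff_identity hσc hφc hSc hPc hσ hφ hS hP eqS eqP hσb hφb h2R hχ hχ0
    have hcd : IntegrableOn (fun x => κ * (χ x * dens σ S P x)) (cube (hw n N (2 * R))) :=
      (continuousOn_const.mul (hχ.continuous.continuousOn.mul
        (hdens _))).integrableOn_compact (isCompact_cube _)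
    have hfc : ContinuousOn (fun x =>
        (χ x * dvg c σ S P x + ∑ i, fderiv ℝ χ x (ei i) * fld c σ φ S P i x))
        (cube (hw n N (2 * R))) := by
      have hχ' : Continuous (fderiv ℝ χ) := hχ.continuous_fderiv one_ne_zero
      refine (hχ.continuous.continuousOn.mul (continuousOn_dvg (hσc.mono (hsub _))
        (hSc.mono (hsub _)) (hPc.mono (hsub _)))).add (continuousOn_finsetSum _ fun i _ => ?_)
      exact ContinuousOn.mul (hχ'.clm_apply continuous_const).continuousOn
        (continuousOn_fld (hσc.mono (hsub _)) (hφc.mono (hsub _))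
        (hSc.mono (hsub _)) (hPc.mono (hsub _)) i)
    have hfi := hfc.integrableOn_compact (μ := volume) (isCompact_cube _)
    have hHi : IntegrableOn
        (fun x => 5 * ((n + 1 : ℕ) : ℝ) * K / R * (dens σ S P x + φ x ^ 2))
        (cube (hw n N (2 * R))) :=
      ((hdensi (2 * R)).add (hφ2i (2 * R))).const_mul (5 * ((n + 1 : ℕ) : ℝ) * K / R)
    have h1 : ∫ x in cube (hw n N (2 * R)), κ * (χ x * dens σ S P x) ≤
        ∫ x in cube (hw n N (2 * R)), ((χ x * dvg c σ S P x +
            ∑ i, fderiv ℝ χ x (ei i) * fld c σ φ S P i x) +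
          5 * ((n + 1 : ℕ) : ℝ) * K / R * (dens σ S P x + φ x ^ 2)) := by
      refine setIntegral_mono_on hcd (hfi.add hHi) (measurableSet_cube _) fun x hx => ?_
      have hx' := hsub _ hx
      have hco : κ * dens σ S P x ≤ dvg c σ S P x := by
        have hp : P x (ei 0) ^ 2 ≤ ∑ j, P x (ei j) ^ 2 :=
          Finset.single_le_sum (f := fun j => P x (ei j) ^ 2) (fun j _ => sq_nonneg _)
            (Finset.mem_univ 0)
        exact coercive hε (Finset.sum_nonneg fun i _ => sq_nonneg (S x (ei i)))
          (Real.exp_pos _).le hp (hlow x hx')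
      have hsum : |∑ i, fderiv ℝ χ x (ei i) * fld c σ φ S P i x| ≤
          5 * ((n + 1 : ℕ) : ℝ) * K / R * (dens σ S P x + φ x ^ 2) := by
        calc |∑ i, fderiv ℝ χ x (ei i) * fld c σ φ S P i x|
            ≤ ∑ i, |fderiv ℝ χ x (ei i) * fld c σ φ S P i x| := Finset.abs_sum_le_sum_abs _ _
          _ ≤ ∑ _i : Fin (n + 1), K / R * (5 * (dens σ S P x + φ x ^ 2)) := by
              refine Finset.sum_le_sum fun i _ => ?_
              rw [abs_mul]
              exact mul_le_mul (hχd x i) (abs_fld_le hc0 hc2 i x (hup x hx')) (abs_nonneg _)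
                (div_nonneg hK0 hR.le)
          _ = _ := by
              rw [Finset.sum_const, Finset.card_univ, Fintype.card_fin, nsmul_eq_mul]; ring
      have h3 := (abs_le.1 hsum).1
      have h4 := mul_le_mul_of_nonneg_left hco (hχn x)
      linarith
    rw [integral_add hfi hHi, hid, integral_const_mul, integral_const_mul,
      integral_add (hdensi _) (hφ2i _), zero_add] at h1
    have h5 : ∫ x in cube (hw n N R0), dens σ S P x ≤
        ∫ x in cube (hw n N (2 * R)), χ x * dens σ S P x := by
      calc ∫ x in cube (hw n N R0), dens σ S P x
          = ∫ x in cube (hw n N R0), χ x * dens σ S P x := by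
            refine setIntegral_congr_fun (measurableSet_cube _) fun x hx => ?_
            rw [hχ1 x (hball x hx), one_mul]
        _ ≤ _ := by
            refine setIntegral_mono_set ?_ ?_ (cube_mono hR0).eventuallyLE
            · exact (hχ.continuous.continuousOn.mul (hdens _)).integrableOn_compact
                (isCompact_cube _)
            · exact ae_of_all _ fun x => mul_nonneg (hχn x) (dens_nonneg x)
    have h6 : 5 * ((n + 1 : ℕ) : ℝ) * K / R * ((∫ x in cube (hw n N (2 * R)), dens σ S P x) +
        ∫ x in cube (hw n N (2 * R)), φ x ^ 2) ≤ B / R := by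
      have : B / R = 5 * ((n + 1 : ℕ) : ℝ) * K / R * (M + 4 * N ^ 2 * M) := by rw [hB]; ring
      rw [this]
      refine mul_le_mul_of_nonneg_left (add_le_add (hM _ h2R) (hφ2 _ h2R)) (by positivity)
    exact (mul_le_mul_of_nonneg_left h5 hκ0.le).trans (h1.trans h6)
  have hzero : ∀ R0 : ℝ, ∫ x in cube (hw n N R0), dens σ S P x = 0 := by
    intro R0
    refine le_antisymm ?_ (setIntegral_nonneg (measurableSet_cube _) fun x _ => dens_nonneg x)
    obtain ⟨Q, hQ⟩ := (isCompact_cube (hw n N R0)).isBounded.exists_norm_le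
    have h1 : κ * ∫ x in cube (hw n N R0), dens σ S P x ≤ 0 := by
      have ht : Tendsto (fun R : ℝ => B / R) atTop (𝓝 0) := tendsto_const_nhds.div_atTop tendsto_id
      refine ge_of_tendsto ht ?_
      filter_upwards [eventually_gt_atTop 0, eventually_ge_atTop Q, eventually_ge_atTop R0]
        with R h1 h2 h3
      exact key R h1 R0 (by linarith) fun x hx => (hQ x hx).trans h2
    by_contra hne
    push Not at hne
    have := mul_pos hκ0 hne
    linarith
  intro x hx
  set U : Set (Ed (n + 1)) := {y | ∀ i, |y i| < hw n N (‖x‖ + 1) i} with hU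
  have hUo : IsOpen U := by
    have : U = ⋂ i, {y : Ed (n + 1) | |y i| < hw n N (‖x‖ + 1) i} := by ext; simp [hU]
    rw [this]
    exact isOpen_iInter_of_finite fun i => isOpen_lt (by fun_prop) continuous_const
  have hUsub : U ⊆ cube (hw n N (‖x‖ + 1)) := fun y hy i => (hy i).le
  have hxU : x ∈ U := by
    intro i
    unfold hw; split_ifs with hi
    · subst hi; exact abs_lt.2 hx
    · exact (PiLp.norm_apply_le x i).trans_lt (by linarith)
  have hae : dens σ S P =ᵐ[volume.restrict U] 0 := by
    have := (setIntegral_eq_zero_iff_of_nonneg_ae (ae_of_all _ fun x => dens_nonneg x)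
      (hdensi (‖x‖ + 1))).1 (hzero _)
    exact ae_restrict_of_ae_restrict_of_subset hUsub this
  exact Measure.eqOn_open_of_ae_eq hae hUo ((hdens _).mono hUsub) continuousOn_const hxU

end Core

/-! ### An a priori bound -/

/-- The necessary second-order condition at an interior maximum on the real line. -/
lemma second_deriv_nonpos {f : ℝ → ℝ} (hmax : IsLocalMax f 0) (hc : ContinuousAt f 0) :
    deriv (deriv f) 0 ≤ 0 := by
  by_contra! h
  have h0 : deriv f 0 = 0 := hmax.deriv_eq_zero
  have hmin := isLocalMin_of_deriv_deriv_pos h h0 hc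
  have hconst : f =ᶠ[𝓝 0] fun _ => f 0 := by
    filter_upwards [hmax, hmin] with t h1 h2 using le_antisymm h1 h2
  have h1 : deriv f =ᶠ[𝓝 0] fun _ => 0 := by
    refine hconst.deriv.trans ?_
    simp
  have h2 : deriv (deriv f) 0 = 0 := by
    rw [h1.deriv_eq]; simp
  linarith

/-- The second derivative in any direction `e` is nonpositive at a local maximum. -/
lemma second_deriv_nonpos' {E : Type*} [NormedAddCommGroup E] [NormedSpace ℝ E] {f : E → ℝ}
    {x e : E} (hf : ContDiffAt ℝ 2 f x) (hmax : IsLocalMax f x) :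
    fderiv ℝ (fun y => fderiv ℝ f y e) x e ≤ 0 := by
  have hl : ∀ t : ℝ, HasDerivAt (fun t : ℝ => x + t • e) e t := fun t => by
    simpa using ((hasDerivAt_id t).smul_const e).const_add x
  have hl0 : Tendsto (fun t : ℝ => x + t • e) (𝓝 0) (𝓝 x) := by
    have := (hl 0).continuousAt.tendsto
    simpa using this
  have hmax' : IsLocalMax (fun t : ℝ => f (x + t • e)) 0 := by
    have := hl0.eventually hmax
    simpa [IsLocalMax, IsMaxFilter] using this
  have hd : ∀ᶠ y in 𝓝 x, DifferentiableAt ℝ f y :=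
    (hf.eventually (by simp)).mono fun y hy => hy.differentiableAt two_ne_zero
  have h1 : deriv (fun t : ℝ => f (x + t • e)) =ᶠ[𝓝 0] fun t => fderiv ℝ f (x + t • e) e := by
    filter_upwards [hl0.eventually hd] with t ht
    exact (ht.hasFDerivAt.comp_hasDerivAt t (hl t)).deriv
  have hd2 : DifferentiableAt ℝ (fun y => fderiv ℝ f y e) x :=
    ((hf.fderiv_right (m := 1) (by norm_num)).differentiableAt one_ne_zero).clm_apply
      (differentiableAt_const e)
  have h2 : deriv (deriv (fun t : ℝ => f (x + t • e))) 0 =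
      fderiv ℝ (fun y => fderiv ℝ f y e) x e := by
    rw [h1.deriv_eq]
    have hx : x + (0 : ℝ) • e = x := by simp
    have h3 : HasFDerivAt (fun y => fderiv ℝ f y e) (fderiv ℝ (fun y => fderiv ℝ f y e) x)
        (x + (0 : ℝ) • e) := by rw [hx]; exact hd2.hasFDerivAt
    exact (h3.comp_hasDerivAt (0 : ℝ) (hl 0)).deriv
  rw [← h2]
  refine second_deriv_nonpos hmax' ?_
  have : ContinuousAt f (x + (0 : ℝ) • e) := by simpa using hf.continuousAt
  exact ContinuousAt.comp (f := fun t : ℝ => x + t • e) this (hl 0).continuousAt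

/-- Leibniz rule for the pure second derivative of a product. -/
lemma second_deriv_mul {E : Type*} [NormedAddCommGroup E] [NormedSpace ℝ E] {f g : E → ℝ}
    {x e : E} (hf : ContDiffAt ℝ 2 f x) (hg : ContDiffAt ℝ 2 g x) :
    fderiv ℝ (fun y => fderiv ℝ (fun z => f z * g z) y e) x e =
      fderiv ℝ (fun y => fderiv ℝ f y e) x e * g x + 2 * (fderiv ℝ f x e * fderiv ℝ g x e) +
        f x * fderiv ℝ (fun y => fderiv ℝ g y e) x e := by
  have hdf : ∀ᶠ y in 𝓝 x, DifferentiableAt ℝ f y :=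
    (hf.eventually (by simp)).mono fun y hy => hy.differentiableAt two_ne_zero
  have hdg : ∀ᶠ y in 𝓝 x, DifferentiableAt ℝ g y :=
    (hg.eventually (by simp)).mono fun y hy => hy.differentiableAt two_ne_zero
  have h1 : (fun y => fderiv ℝ (fun z => f z * g z) y e) =ᶠ[𝓝 x]
      fun y => f y * fderiv ℝ g y e + g y * fderiv ℝ f y e := by
    filter_upwards [hdf, hdg] with y h1 h2
    rw [fderiv_fun_mul h1 h2]; simp
  have hf2 : DifferentiableAt ℝ (fun y => fderiv ℝ f y e) x :=
    ((hf.fderiv_right (m := 1) (by norm_num)).differentiableAt one_ne_zero).clm_apply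
      (differentiableAt_const e)
  have hg2 : DifferentiableAt ℝ (fun y => fderiv ℝ g y e) x :=
    ((hg.fderiv_right (m := 1) (by norm_num)).differentiableAt one_ne_zero).clm_apply
      (differentiableAt_const e)
  have hf1 := hf.differentiableAt two_ne_zero
  have hg1 := hg.differentiableAt two_ne_zero
  rw [h1.fderiv_eq, ((hf1.hasFDerivAt.fun_mul hg2.hasFDerivAt).fun_add
    (hg1.hasFDerivAt.fun_mul hf2.hasFDerivAt)).fderiv]
  simp; ring

lemma second_deriv_normSq {E : Type*} [NormedAddCommGroup E] [NormedSpace ℝ E] {ψ : E → ℂ}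
    {x e : E} (k : ℝ) (hf : ContDiffAt ℝ 2 ψ x) :
    fderiv ℝ (fun y => fderiv ℝ (fun z => ‖ψ z‖ ^ 2 - k) y e) x e =
      2 * ‖fderiv ℝ ψ x e‖ ^ 2 +
        2 * inner ℝ (ψ x) (fderiv ℝ (fun y => fderiv ℝ ψ y e) x e) := by
  have hdf : ∀ᶠ y in 𝓝 x, DifferentiableAt ℝ ψ y :=
    (hf.eventually (by simp)).mono fun y hy => hy.differentiableAt two_ne_zero
  have h1 : (fun y => fderiv ℝ (fun z => ‖ψ z‖ ^ 2 - k) y e) =ᶠ[𝓝 x]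
      fun y => 2 * inner ℝ (ψ y) (fderiv ℝ ψ y e) := by
    filter_upwards [hdf] with y h1
    rw [(h1.hasFDerivAt.norm_sq.sub_const k).fderiv]; simp; ring
  have hf2 : DifferentiableAt ℝ (fun y => fderiv ℝ ψ y e) x :=
    ((hf.fderiv_right (m := 1) (by norm_num)).differentiableAt one_ne_zero).clm_apply
      (differentiableAt_const e)
  have hf1 := hf.differentiableAt two_ne_zero
  rw [h1.fderiv_eq, ((hf1.hasFDerivAt.inner ℝ hf2.hasFDerivAt).const_mul 2).fderiv]
  simp
  ring

lemma slab_isOpen (d N : ℕ) [NeZero d] : IsOpen (slab d N) :=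
  (isOpen_lt (f := fun _ : Ed d => -(N : ℝ)) (g := fun x => x 0) continuous_const
    (by fun_prop)).inter
    (isOpen_lt (f := fun x : Ed d => x 0) (by fun_prop) continuous_const)

lemma slabCl_isClosed (d N : ℕ) [NeZero d] : IsClosed (slabCl d N) :=
  (isClosed_le (f := fun _ : Ed d => -(N : ℝ)) (g := fun x => x 0) continuous_const
    (by fun_prop)).inter
    (isClosed_le (f := fun x : Ed d => x 0) (by fun_prop) continuous_const)

lemma slab_subset_slabCl (d N : ℕ) [NeZero d] : slab d N ⊆ slabCl d N :=
  fun _ hx => ⟨hx.1.le, hx.2.le⟩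

lemma slab_or_bdry {d N : ℕ} [NeZero d] {x : Ed d} (hx : x ∈ slabCl d N) :
    x ∈ slab d N ∨ x ∈ slabBdry d N := by
  rcases hx.1.eq_or_lt with h | h
  · exact Or.inr (Or.inl h.symm)
  rcases hx.2.eq_or_lt with h' | h'
  · exact Or.inr (Or.inr h')
  · exact Or.inl ⟨h, h'⟩

lemma SlabSolution.contDiffAt {d N : ℕ} [NeZero d] {c : ℝ} {ψ : Ed d → ℂ}
    (h : SlabSolution d N c ψ) {x : Ed d} (hx : x ∈ slab d N) : ContDiffAt ℝ (⊤ : ℕ∞) ψ x :=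
  h.1.contDiffAt (mem_of_superset ((slab_isOpen d N).mem_nhds hx) (slab_subset_slabCl d N))

/-- The differential inequality `Δw ≥ 2w²` for `w = |ψ|² - (1 + c²/4)` where `w ≥ 0`. -/
lemma laplacian_lower {d : ℕ} [NeZero d] {c w : ℝ} {ψ : Ed d → ℂ} {x : Ed d}
    (h : Complex.I * (c : ℂ) * pd ψ 0 x + lap ψ x + (1 - (‖ψ x‖ : ℂ) ^ 2) * ψ x = 0)
    (hw : w = ‖ψ x‖ ^ 2 - (1 + c ^ 2 / 4)) (hw0 : 0 ≤ w) :
    2 * w ^ 2 ≤ ∑ i, (2 * ‖fderiv ℝ ψ x (EuclideanSpace.single i 1)‖ ^ 2 +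
      2 * inner ℝ (ψ x) (fderiv ℝ (fun y => fderiv ℝ ψ y (EuclideanSpace.single i 1)) x
        (EuclideanSpace.single i 1))) := by
  rw [Finset.sum_add_distrib, ← Finset.mul_sum, ← Finset.mul_sum, ← inner_sum]
  change _ ≤ 2 * ∑ i, ‖pd ψ i x‖ ^ 2 + 2 * inner ℝ (ψ x) (lap ψ x)
  have h1 : ‖pd ψ 0 x‖ ^ 2 ≤ ∑ i, ‖pd ψ i x‖ ^ 2 :=
    Finset.single_le_sum (f := fun i => ‖pd ψ i x‖ ^ 2) (fun _ _ => sq_nonneg _)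
      (Finset.mem_univ 0)
  have h2 : lap ψ x = -(Complex.I * (c : ℂ) * pd ψ 0 x) - (1 - (‖ψ x‖ : ℂ) ^ 2) * ψ x := by
    linear_combination h
  have h3 : inner ℝ (ψ x) (lap ψ x) =
      -inner ℝ (ψ x) (Complex.I * (c : ℂ) * pd ψ 0 x) - (1 - ‖ψ x‖ ^ 2) * ‖ψ x‖ ^ 2 := by
    rw [h2, inner_sub_right, inner_neg_right]
    have : (1 - (‖ψ x‖ : ℂ) ^ 2) * ψ x = (1 - ‖ψ x‖ ^ 2 : ℝ) • ψ x := by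
      rw [Complex.real_smul]; push_cast; ring
    rw [this, inner_smul_right, real_inner_self_eq_norm_sq]
  have h4 : inner ℝ (ψ x) (Complex.I * (c : ℂ) * pd ψ 0 x) ≤ ‖ψ x‖ * (|c| * ‖pd ψ 0 x‖) := by
    refine (real_inner_le_norm _ _).trans (le_of_eq ?_)
    simp
  have h5 := sq_nonneg (‖pd ψ 0 x‖ - |c| / 2 * ‖ψ x‖)
  have h6 := sq_abs c
  have h7 : w ≤ ‖ψ x‖ ^ 2 := by rw [hw]; nlinarith [sq_nonneg c]
  have h8 : w * w ≤ ‖ψ x‖ ^ 2 * w := mul_le_mul_of_nonneg_right h7 hw0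
  have h9 : ‖ψ x‖ ^ 2 * w = ‖ψ x‖ ^ 2 * (‖ψ x‖ ^ 2 - 1) - |c| ^ 2 / 4 * ‖ψ x‖ ^ 2 := by
    rw [hw, h6]; ring
  nlinarith

/-- A priori bound (Keller–Osserman): solutions of the slab problem are bounded. Apply the maximum
principle to `(|ψ|² - 1 - c²/4)(1 - |x - x₀|²)²` on the part of a unit ball lying in the slab. -/
lemma SlabSolution.bounded {d N : ℕ} [NeZero d] {c : ℝ} {ψ : Ed d → ℂ}
    (h : SlabSolution d N c ψ) {x₀ : Ed d} (hx₀ : x₀ ∈ slab d N) :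
    ‖ψ x₀‖ ^ 2 ≤ 1 + c ^ 2 / 4 + (12 + 2 * d) := by
  set w : Ed d → ℝ := fun x => ‖ψ x‖ ^ 2 - (1 + c ^ 2 / 4) with hw
  set q : Ed d → ℝ := fun x => (1 - ‖x - x₀‖ ^ 2) ^ 2 with hq
  have hK : IsCompact (closedBall x₀ 1 ∩ slabCl d N) :=
    (isCompact_closedBall x₀ 1).inter_right (slabCl_isClosed d N)
  have hx₀K : x₀ ∈ closedBall x₀ 1 ∩ slabCl d N :=
    ⟨mem_closedBall_self zero_le_one, slab_subset_slabCl d N hx₀⟩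
  have hqd : ContDiff ℝ 2 q := by
    have : ContDiff ℝ 2 fun x => ‖x - x₀‖ ^ 2 := (contDiff_id.sub contDiff_const).norm_sq ℝ
    exact (contDiff_const.sub this).pow 2
  have hfc : ContinuousOn (fun x => w x * q x) (closedBall x₀ 1 ∩ slabCl d N) := by
    have hψ := h.1.continuousOn.mono (Set.inter_subset_right (s := closedBall x₀ 1))
    exact ((hψ.norm.pow 2).sub continuousOn_const).mul hqd.continuous.continuousOn
  obtain ⟨x, hxK, hx⟩ := hK.exists_isMaxOn ⟨x₀, hx₀K⟩ hfc
  have hle : w x₀ ≤ w x * q x := by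
    have := hx hx₀K
    simpa [hq] using this
  suffices hs : w x * q x ≤ 12 + 2 * d by
    have : w x₀ = ‖ψ x₀‖ ^ 2 - (1 + c ^ 2 / 4) := rfl
    linarith
  by_contra! hlt
  have hpos : 0 < w x * q x := lt_trans (by positivity) hlt
  have hq0 : 0 ≤ q x := sq_nonneg _
  have hw0 : 0 < w x := pos_of_mul_pos_left hpos hq0
  have hqpos : 0 < q x := pos_of_mul_pos_right hpos hw0.le
  have hxs : x ∈ slab d N := by
    rcases slab_or_bdry hxK.2 with h1 | h1
    · exact h1
    · have : w x = 1 - (1 + c ^ 2 / 4) := by simp [hw, h.2.2.1 x h1]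
      nlinarith [sq_nonneg c]
  set ζ := 1 - ‖x - x₀‖ ^ 2 with hζ
  have hqζ : q x = ζ ^ 2 := rfl
  have hn1 : ‖x - x₀‖ ≤ 1 := by simpa [dist_eq_norm] using hxK.1
  have hζ0 : 0 < ζ := by
    rcases hn1.lt_or_eq with h1 | h1
    · rw [hζ]; nlinarith [norm_nonneg (x - x₀)]
    · rw [hqζ, hζ, h1] at hqpos; norm_num at hqpos
  have hζ1 : ζ ≤ 1 := by rw [hζ]; nlinarith [sq_nonneg ‖x - x₀‖]
  have hnb : closedBall x₀ 1 ∩ slabCl d N ∈ 𝓝 x := by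
    refine inter_mem (closedBall_mem_nhds_of_mem ?_)
      (mem_of_superset ((slab_isOpen d N).mem_nhds hxs) (slab_subset_slabCl d N))
    rw [mem_ball, dist_eq_norm]
    by_contra! h1
    have : ‖x - x₀‖ = 1 := le_antisymm hn1 h1
    rw [hζ, this] at hζ0; norm_num at hζ0
  have hmax : IsLocalMax (fun x => w x * q x) x := hx.isLocalMax hnb
  have hψ2 : ContDiffAt ℝ 2 ψ x := (h.contDiffAt hxs).of_le (WithTop.coe_le_coe.2 le_top)
  have hw2 : ContDiffAt ℝ 2 w x := (hψ2.norm_sq ℝ).sub contDiffAt_const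
  have hfd : fderiv ℝ (fun x => w x * q x) x = 0 := hmax.fderiv_eq_zero
  have hqd1 : ∀ y e, fderiv ℝ q y e = -4 * ((1 - ‖y - x₀‖ ^ 2) * inner ℝ (y - x₀) e) := by
    intro y e
    have h1 : HasFDerivAt (fun x => ‖x - x₀‖ ^ 2) _ y := ((hasFDerivAt_id y).sub_const x₀).norm_sq
    have h2 := (h1.const_sub 1).pow 2
    rw [h2.fderiv]
    simp [inner_sub_left]; ring
  have hqd2 : ∀ e, fderiv ℝ (fun y => fderiv ℝ q y e) x e =
      8 * inner ℝ (x - x₀) e ^ 2 - 4 * ζ * inner ℝ e e := by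
    intro e
    simp only [hqd1]
    have h1 : HasFDerivAt (fun x => ‖x - x₀‖ ^ 2) _ x := ((hasFDerivAt_id x).sub_const x₀).norm_sq
    have h3 : HasFDerivAt (fun x => inner ℝ (x - x₀) e) _ x :=
      ((hasFDerivAt_id x).sub_const x₀).inner ℝ (hasFDerivAt_const e x)
    have h2 := ((h1.const_sub 1).fun_mul h3).const_mul (-4)
    rw [h2.fderiv]
    simp [← hζ, inner_sub_left, -inner_self_eq_norm_sq_to_K]; ring
  -- second-order condition in each coordinate direction
  have hdir : ∀ i : Fin d, fderiv ℝ (fun y => fderiv ℝ w y (EuclideanSpace.single i 1)) x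
      (EuclideanSpace.single i 1) * ζ ^ 2 ≤ w x * (24 * (x - x₀) i ^ 2 + 4 * ζ) := by
    intro i
    set e : Ed d := EuclideanSpace.single i 1 with he
    have hin : inner ℝ (x - x₀) e = (x - x₀) i := by
      rw [he, EuclideanSpace.inner_single_right]; simp
    have hee : inner ℝ e e = (1 : ℝ) := by
      rw [he, EuclideanSpace.inner_single_right]; simp
    have h1 := second_deriv_nonpos' (e := e) (hw2.mul hqd.contDiffAt) hmax
    rw [second_deriv_mul hw2 hqd.contDiffAt, hqd1, hqd2, hin, hee, hqζ, ← hζ] at h1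
    have h2 : fderiv ℝ (fun x => w x * q x) x e = 0 := by rw [hfd]; simp
    rw [fderiv_fun_mul (hw2.differentiableAt two_ne_zero)
      (hqd.contDiffAt.differentiableAt two_ne_zero)] at h2
    simp only [add_apply, smul_apply, smul_eq_mul, hqd1, hin, hqζ, ← hζ] at h2
    set b := fderiv ℝ w x e
    set y := (x - x₀) i
    have h3 : b * ζ = 4 * w x * y := by
      have : ζ * (b * ζ - 4 * w x * y) = 0 := by linear_combination h2
      rcases mul_eq_zero.1 this with h | h
      · exact absurd h hζ0.ne'
      · linarith
    have h4 : 2 * (b * (-4 * (ζ * y))) = -32 * w x * y ^ 2 := by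
      linear_combination (-8 * y) * h3
    nlinarith
  have hlow := laplacian_lower (h.2.1 x hxs) (w := w x) rfl hw0.le
  have hsum := Finset.sum_le_sum fun i (_ : i ∈ Finset.univ) => hdir i
  rw [← Finset.sum_mul, ← Finset.mul_sum, Finset.sum_add_distrib, ← Finset.mul_sum,
    ← EuclideanSpace.real_norm_sq_eq] at hsum
  simp only [hw, second_deriv_normSq (1 + c ^ 2 / 4) hψ2] at hsum
  simp only [Finset.sum_const, Finset.card_univ, Fintype.card_fin, nsmul_eq_mul] at hsum
  have h1 := mul_le_mul_of_nonneg_right hlow (sq_nonneg ζ)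
  have h2 : w x * (2 * (w x * ζ ^ 2)) ≤ w x * (24 + d * 4) := by
    have h3 : w x * (24 * ‖x - x₀‖ ^ 2 + d * (4 * ζ)) ≤ w x * (24 + d * 4) := by
      have : (d : ℝ) * (4 * ζ) ≤ d * 4 := mul_le_mul_of_nonneg_left (by linarith) (by positivity)
      refine mul_le_mul_of_nonneg_left ?_ hw0.le
      nlinarith [norm_nonneg (x - x₀)]
    refine le_trans ?_ (h1.trans (hsum.trans h3))
    exact le_of_eq (by ring)
  have h3 := le_of_mul_le_mul_left h2 hw0
  rw [hqζ] at hlt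
  linarith

/-! ### The logarithm of a nonvanishing function on the slab -/

lemma slabCl_convex (d N : ℕ) [NeZero d] : Convex ℝ (slabCl d N) :=
  (convex_Icc (-(N : ℝ)) N).linear_preimage
    (EuclideanSpace.proj (𝕜 := ℝ) (0 : Fin d)).toLinearMap

lemma slab_convex (d N : ℕ) [NeZero d] : Convex ℝ (slab d N) :=
  (convex_Ioo (-(N : ℝ)) N).linear_preimage
    (EuclideanSpace.proj (𝕜 := ℝ) (0 : Fin d)).toLinearMap

lemma face_convex (d : ℕ) [NeZero d] (a : ℝ) : Convex ℝ {x : Ed d | x 0 = a} :=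
  (convex_singleton a).linear_preimage
    (EuclideanSpace.proj (𝕜 := ℝ) (0 : Fin d)).toLinearMap

lemma zero_mem_slab (d : ℕ) {N : ℕ} [NeZero d] (hN : 0 < N) : (0 : Ed d) ∈ slab d N := by
  have : (0 : ℝ) < N := by exact_mod_cast hN
  simp [slab, hN]

lemma slabCl_interior_nonempty (d : ℕ) {N : ℕ} [NeZero d] (hN : 0 < N) :
    (interior (slabCl d N)).Nonempty :=
  ⟨0, interior_maximal (slab_subset_slabCl d N) (slab_isOpen d N) (zero_mem_slab d hN)⟩

lemma slabCl_uniqueDiffOn (d : ℕ) {N : ℕ} [NeZero d] (hN : 0 < N) :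
    UniqueDiffOn ℝ (slabCl d N) :=
  uniqueDiffOn_convex (slabCl_convex d N) (slabCl_interior_nonempty d hN)

/-- A continuous function with `exp L = 1` on a convex set is constant there. -/
lemma const_of_exp_eq_one {E : Type*} [NormedAddCommGroup E] [NormedSpace ℝ E] {F : Set E}
    (hF : Convex ℝ F) {L : E → ℂ} (hL : ContinuousOn L F) (h1 : ∀ x ∈ F, Complex.exp (L x) = 1)
    {x y : E} (hx : x ∈ F) (hy : y ∈ F) : L x = L y := by
  have hd : DiscreteTopology (Set.range ((↑) : ℤ → ℝ)) :=
    (Int.isClosedEmbedding_coe_real.isEmbedding.toHomeomorph).symm.isEmbedding.discreteTopology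
  have hpi : (2 * Real.pi * Complex.I : ℂ) ≠ 0 := Complex.two_pi_I_ne_zero
  have hint : ∀ z ∈ F, ∃ m : ℤ, L z / (2 * Real.pi * Complex.I) = m := by
    intro z hz
    obtain ⟨m, hm⟩ := Complex.exp_eq_one_iff.1 (h1 z hz)
    exact ⟨m, by rw [hm]; field_simp⟩
  have hc : ContinuousOn (fun z => (L z / (2 * Real.pi * Complex.I)).re) F :=
    Complex.continuous_re.comp_continuousOn (hL.div_const _)
  have := hF.isPreconnected.constant_of_mapsTo (T := Set.range ((↑) : ℤ → ℝ)) ⟨hd⟩ hc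
    (fun z hz => by
      obtain ⟨m, hm⟩ := hint z hz
      exact ⟨m, by simp [hm]⟩) hx hy
  obtain ⟨m, hm⟩ := hint x hx
  obtain ⟨m', hm'⟩ := hint y hy
  simp only [hm, hm', Complex.intCast_re] at this
  have h2 : L x / (2 * Real.pi * Complex.I) = L y / (2 * Real.pi * Complex.I) := by
    rw [hm, hm']; exact_mod_cast this
  exact (div_left_inj' hpi).1 h2

/-- A nonvanishing smooth function on the closed slab has a logarithm `L`: integrate the closed
one-form `ω = ψ⁻¹ dψ` by the Poincaré lemma. If `ψ = 1` on both faces, `L` can be normalised to vanish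
on the left face, and it equals a constant `k` on the right face. -/
lemma exists_log {d N : ℕ} [NeZero d] (hN : 0 < N) {ψ : Ed d → ℂ}
    (hψ : ContDiffOn ℝ (⊤ : ℕ∞) ψ (slabCl d N)) (hne : ∀ x ∈ slabCl d N, ψ x ≠ 0)
    (hb : ∀ x ∈ slabBdry d N, ψ x = 1) :
    ∃ (L : Ed d → ℂ) (ω : Ed d → (Ed d →L[ℝ] ℂ)) (k : ℂ), ContinuousOn L (slabCl d N) ∧
      ContinuousOn ω (slabCl d N) ∧ (∀ x ∈ slab d N, HasFDerivAt L (ω x) x) ∧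
      (∀ x ∈ slab d N, DifferentiableAt ℝ ω x) ∧
      (∀ x ∈ slabCl d N, ψ x = Complex.exp (L x)) ∧
      (∀ x : Ed d, x 0 = -(N : ℝ) → L x = 0) ∧ ∀ x : Ed d, x 0 = (N : ℝ) → L x = k := by
  have hN0 : (0 : ℝ) ≤ N := Nat.cast_nonneg N
  have hu := slabCl_uniqueDiffOn d hN
  have hcv := slabCl_convex d N
  set g := fderivWithin ℝ ψ (slabCl d N) with hg
  have hgc : ContDiffOn ℝ 1 g (slabCl d N) :=
    hψ.fderivWithin hu (WithTop.coe_le_coe.2 le_top)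
  have hψ1 : ContDiffOn ℝ 1 ψ (slabCl d N) := hψ.of_le (WithTop.coe_le_coe.2 le_top)
  have hinv : ContDiffOn ℝ 1 (fun x => (ψ x)⁻¹) (slabCl d N) := hψ1.inv hne
  set ω : Ed d → (Ed d →L[ℝ] ℂ) := fun x => (ψ x)⁻¹ • g x with hω
  have hωc : ContDiffOn ℝ 1 ω (slabCl d N) := hinv.smul hgc
  have hωd : DifferentiableOn ℝ ω (slabCl d N) := hωc.differentiableOn one_ne_zero
  have hψd : ∀ x ∈ slabCl d N, HasFDerivWithinAt ψ (g x) (slabCl d N) x := fun x hx =>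
    (hψ1.differentiableOn one_ne_zero x hx).hasFDerivWithinAt
  obtain ⟨f, hf⟩ := hcv.exists_forall_hasFDerivWithinAt_of_fderivWithin_symmetric hωd (by
    intro a ha x _ y _
    have hsymm : IsSymmSndFDerivWithinAt ℝ ψ (slabCl d N) a := by
      refine (hψ a ha).isSymmSndFDerivWithinAt ?_ hu ?_ ha
      · rw [minSmoothness_of_isRCLikeNormedField]
        exact WithTop.coe_le_coe.2 le_top
      · rw [hcv.closure_interior_eq_closure_of_nonempty_interior (slabCl_interior_nonempty d hN)]
        exact subset_closure ha
    have hs := hsymm x y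
    rw [← hg] at hs
    have h1 : HasFDerivWithinAt (fun x => (ψ x)⁻¹) _ (slabCl d N) a :=
      (hasFDerivAt_inv' (𝕜 := ℝ) (hne a ha)).comp_hasFDerivWithinAt a (hψd a ha)
    have h2 : HasFDerivWithinAt g (fderivWithin ℝ g (slabCl d N) a) (slabCl d N) a :=
      (hgc.differentiableOn one_ne_zero a ha).hasFDerivWithinAt
    rw [(h1.fun_smul h2).fderivWithin (hu a ha)]
    simp [hs]
    ring)
  set x₀ : Ed d := EuclideanSpace.single 0 (-(N : ℝ)) with hx₀
  have hx₀0 : x₀ 0 = -(N : ℝ) := by simp [hx₀]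
  have hx₀m : x₀ ∈ slabCl d N := by rw [slabCl, Set.mem_ofPred_eq, hx₀0]; constructor <;> linarith
  set L : Ed d → ℂ := fun x => f x - f x₀ with hL
  have hLd : ∀ x ∈ slabCl d N, HasFDerivWithinAt L (ω x) (slabCl d N) x := fun x hx =>
    (hf x hx).sub_const _
  have hLc : ContinuousOn L (slabCl d N) := fun x hx => (hLd x hx).continuousWithinAt
  have hexp : ∀ x ∈ slabCl d N, ψ x = Complex.exp (L x) := by
    intro x hx
    have hder : ∀ y ∈ slabCl d N, HasFDerivWithinAt (fun y => ψ y * Complex.exp (-L y))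
        (0 : Ed d →L[ℝ] ℂ) (slabCl d N) y := by
      intro y hy
      refine ((hψd y hy).fun_mul (hLd y hy).neg.cexp).congr_fderiv ?_
      have := hne y hy
      ext v
      simp [hω]
      field_simp
      ring
    have := hcv.is_const_of_fderivWithin_eq_zero (𝕜 := ℝ)
      (fun y hy => (hder y hy).differentiableWithinAt)
      (fun y hy => (hder y hy).fderivWithin (hu y hy)) hx hx₀m
    simp only [hL, sub_self, neg_zero, Complex.exp_zero, hb x₀ (Or.inl hx₀0), mul_one] at this
    rw [Complex.exp_neg] at this
    have h0 := Complex.exp_ne_zero (f x - f x₀)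
    field_simp at this
    simpa [hL] using this
  have hface : ∀ a : ℝ, |a| = N → ∀ x y : Ed d, x 0 = a → y 0 = a → L x = L y := by
    intro a ha x y hx hy
    have hsub : {x : Ed d | x 0 = a} ⊆ slabCl d N := by
      intro z hz
      rw [Set.mem_ofPred_eq] at hz
      rw [slabCl, Set.mem_ofPred_eq, hz]
      exact abs_le.1 ha.le
    refine const_of_exp_eq_one (face_convex d a) (hLc.mono hsub) (fun z hz => ?_) hx hy
    rw [← hexp z (hsub hz)]
    refine hb z ?_
    rw [Set.mem_ofPred_eq] at hz
    rw [slabBdry, Set.mem_ofPred_eq, hz]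
    rcases abs_cases a with h | h
    · right; linarith
    · left; linarith
  have hnhds : ∀ x ∈ slab d N, slabCl d N ∈ 𝓝 x := fun x hx =>
    mem_of_superset ((slab_isOpen d N).mem_nhds hx) (slab_subset_slabCl d N)
  refine ⟨L, ω, L (EuclideanSpace.single 0 (N : ℝ)), hLc, hωc.continuousOn, ?_, ?_, hexp, ?_, ?_⟩
  · exact fun x hx => (hLd x (slab_subset_slabCl d N hx)).hasFDerivAt (hnhds x hx)
  · exact fun x hx => (hωd x (slab_subset_slabCl d N hx)).differentiableAt (hnhds x hx)
  · intro x hx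
    rw [hface (-N) (by simp) x x₀ hx hx₀0]
    simp [hL]
  · intro x hx
    exact hface N (by simp) x _ hx (by simp)

/-! ### Amplitude and phase of a solution, and the conclusion -/

lemma ae_coord_ne {d : ℕ} (i : Fin d) (a : ℝ) : ∀ᵐ x : Ed d, x i ≠ a := by
  have h := (PiLp.volume_preserving_ofLp (Fin d)).quasiMeasurePreserving.preimage_null
    (Measure.pi_hyperplane (fun _ : Fin d => (volume : Measure ℝ)) i a)
  rw [ae_iff]
  convert h using 2
  ext x; simp

/-- Second derivatives of the real or imaginary part (or any real-linear image) of a one-form. -/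
lemma fderiv_comp_form {E : Type*} [NormedAddCommGroup E] [NormedSpace ℝ E] (T : ℂ →L[ℝ] ℝ)
    {ω : E → (E →L[ℝ] ℂ)} {x : E} (h : DifferentiableAt ℝ ω x) :
    DifferentiableAt ℝ (fun y => T.comp (ω y)) x ∧
      ∀ v w, fderiv ℝ (fun y => T.comp (ω y)) x v w = T (fderiv ℝ ω x v w) := by
  have h1 : HasFDerivAt (fun y => T.comp (ω y))
      ((ContinuousLinearMap.compL ℝ E ℂ ℝ T).comp (fderiv ℝ ω x)) x :=
    (ContinuousLinearMap.compL ℝ E ℂ ℝ T).hasFDerivAt.comp x h.hasFDerivAt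
  exact ⟨h1.differentiableAt, fun v w => by rw [h1.fderiv]; simp⟩

/-- The equation for `ψ = e^L` in terms of `ω = dL`. -/
lemma log_equation {d : ℕ} [NeZero d] {c : ℝ} {ψ : Ed d → ℂ} {ω : Ed d → (Ed d →L[ℝ] ℂ)}
    {x : Ed d} (hne : ψ x ≠ 0) (hψ : ∀ᶠ y in 𝓝 x, HasFDerivAt ψ (ψ y • ω y) y)
    (hω : DifferentiableAt ℝ ω x)
    (h : Complex.I * (c : ℂ) * pd ψ 0 x + lap ψ x + (1 - (‖ψ x‖ : ℂ) ^ 2) * ψ x = 0) :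
    Complex.I * (c : ℂ) * ω x (EuclideanSpace.single 0 1) +
      ∑ i, (fderiv ℝ ω x (EuclideanSpace.single i 1) (EuclideanSpace.single i 1) +
        ω x (EuclideanSpace.single i 1) ^ 2) + (1 - (‖ψ x‖ : ℂ) ^ 2) = 0 := by
  have hx := hψ.self_of_nhds
  have h1 : pd ψ 0 x = ψ x * ω x (EuclideanSpace.single 0 1) := by
    rw [pd, hx.fderiv]; simp
  have h2 : ∀ e, fderiv ℝ (fun y => fderiv ℝ ψ y e) x e =
      ψ x * (fderiv ℝ ω x e e + ω x e ^ 2) := by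
    intro e
    have h3 : (fun y => fderiv ℝ ψ y e) =ᶠ[𝓝 x] fun y => ψ y * ω y e := by
      filter_upwards [hψ] with y hy
      rw [hy.fderiv]; simp
    rw [h3.fderiv_eq, (hx.fun_mul (hω.hasFDerivAt.clm_apply (hasFDerivAt_const e x))).fderiv]
    simp; ring
  have h3 : lap ψ x = ψ x * ∑ i, (fderiv ℝ ω x (EuclideanSpace.single i 1)
      (EuclideanSpace.single i 1) + ω x (EuclideanSpace.single i 1) ^ 2) := by
    rw [lap, Finset.mul_sum]
    exact Finset.sum_congr rfl fun i _ => h2 _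
  rw [h1, h3] at h
  have : ψ x * (Complex.I * (c : ℂ) * ω x (EuclideanSpace.single 0 1) +
      ∑ i, (fderiv ℝ ω x (EuclideanSpace.single i 1) (EuclideanSpace.single i 1) +
        ω x (EuclideanSpace.single i 1) ^ 2) + (1 - (‖ψ x‖ : ℂ) ^ 2)) = 0 := by
    linear_combination h
  exact (mul_eq_zero.1 this).resolve_left hne

/-- A solution whose modulus stays in the coercive range `3|ψ|² - 1 > c²` is a constant of
modulus one. -/
lemma trivial_of_modulus {n N : ℕ} (hN : 0 < N) (hn : 0 < n) {c ε : ℝ} (hc0 : 0 ≤ c) (hc2 : c ≤ 2)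
    (hε : 0 < ε) {ψ : Ed (n + 1) → ℂ} (hsol : SlabSolution (n + 1) N c ψ)
    (hlow : ∀ x ∈ slabCl (n + 1) N, c ^ 2 + ε ≤ 3 * ‖ψ x‖ ^ 2 - 1)
    (hup : ∀ x ∈ slabCl (n + 1) N, ‖ψ x‖ ^ 2 ≤ 4) : ¬ SlabNontriv (n + 1) N ψ := by
  have hr : ∀ x ∈ slabCl (n + 1) N, 1 / 3 ≤ ‖ψ x‖ ^ 2 := fun x hx => by
    nlinarith [hlow x hx, sq_nonneg c]
  have hne : ∀ x ∈ slabCl (n + 1) N, ψ x ≠ 0 := fun x hx h0 => by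
    have := hr x hx
    rw [h0] at this; norm_num at this
  have hscl := slab_subset_slabCl (n + 1) N
  obtain ⟨hsm, hpde, hbd, hen⟩ := hsol
  obtain ⟨L, ω, k, hLc, hωc, hLd, hωd, hexp, hleft, hright⟩ := exists_log hN hsm hne hbd
  set σ : Ed (n + 1) → ℝ := fun x => (L x).re with hσ
  set φ : Ed (n + 1) → ℝ := fun x => (L x).im with hφ
  set S : Ed (n + 1) → (Ed (n + 1) →L[ℝ] ℝ) := fun x => Complex.reCLM.comp (ω x) with hS
  set P : Ed (n + 1) → (Ed (n + 1) →L[ℝ] ℝ) := fun x => Complex.imCLM.comp (ω x) with hP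
  have hSi : ∀ x e, S x e = (ω x e).re := fun _ _ => rfl
  have hPi : ∀ x e, P x e = (ω x e).im := fun _ _ => rfl
  have hρ : ∀ x ∈ slabCl (n + 1) N, Real.exp (2 * σ x) = ‖ψ x‖ ^ 2 := fun x hx => by
    rw [hexp x hx, Complex.norm_exp, ← Real.exp_nat_mul]; norm_num [hσ]
  have hσc : ContinuousOn σ (slabCl (n + 1) N) := Complex.continuous_re.comp_continuousOn hLc
  have hφc : ContinuousOn φ (slabCl (n + 1) N) := Complex.continuous_im.comp_continuousOn hLc
  have hSc : ContinuousOn S (slabCl (n + 1) N) := continuousOn_const.clm_comp hωc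
  have hPc : ContinuousOn P (slabCl (n + 1) N) := continuousOn_const.clm_comp hωc
  have hσd : ∀ x ∈ slab (n + 1) N, HasFDerivAt σ (S x) x := fun x hx =>
    Complex.reCLM.hasFDerivAt.comp x (hLd x hx)
  have hφd : ∀ x ∈ slab (n + 1) N, HasFDerivAt φ (P x) x := fun x hx =>
    Complex.imCLM.hasFDerivAt.comp x (hLd x hx)
  have hψd : ∀ x ∈ slab (n + 1) N, HasFDerivAt ψ (ψ x • ω x) x := by
    intro x hx
    have h1 : ψ =ᶠ[𝓝 x] fun y => Complex.exp (L y) := by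
      filter_upwards [(slab_isOpen (n + 1) N).mem_nhds hx] with y hy using hexp y (hscl hy)
    rw [hexp x (hscl hx)]
    exact (hLd x hx).cexp.congr_of_eventuallyEq h1
  have heq : ∀ x ∈ slab (n + 1) N, _ := fun x hx => log_equation (hne x (hscl hx))
    (by filter_upwards [(slab_isOpen (n + 1) N).mem_nhds hx] with y hy using hψd y hy)
    (hωd x hx) (hpde x hx)
  have eqS : ∀ x ∈ slab (n + 1) N, ∑ i, fderiv ℝ S x (ei i) (ei i) =
      c * P x (ei 0) - ∑ i, S x (ei i) ^ 2 + ∑ i, P x (ei i) ^ 2 -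
        (1 - Real.exp (2 * σ x)) := by
    intro x hx
    have h1 := congrArg Complex.re (heq x hx)
    simp only [Complex.add_re, Complex.re_sum, sq, Complex.mul_re, Complex.I_re, Complex.I_im,
      Complex.ofReal_re, Complex.ofReal_im, Complex.sub_re, Complex.one_re, Complex.zero_re,
      Complex.mul_im, Finset.sum_add_distrib, Finset.sum_sub_distrib] at h1
    have h2 : ∀ v w, fderiv ℝ S x v w = (fderiv ℝ ω x v w).re :=
      (fderiv_comp_form Complex.reCLM (hωd x hx)).2
    simp only [h2, hSi, hPi, hρ x (hscl hx), sq]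
    linarith
  have eqP : ∀ x ∈ slab (n + 1) N, ∑ i, fderiv ℝ P x (ei i) (ei i) =
      - c * S x (ei 0) - 2 * ∑ i, S x (ei i) * P x (ei i) := by
    intro x hx
    have h1 := congrArg Complex.im (heq x hx)
    simp only [Complex.add_im, Complex.im_sum, sq, Complex.mul_re, Complex.I_re, Complex.I_im,
      Complex.ofReal_re, Complex.ofReal_im, Complex.sub_im, Complex.one_im, Complex.zero_im,
      Complex.mul_im, Finset.sum_add_distrib] at h1
    have h2 : ∑ i, (ω x (ei i)).im * (ω x (ei i)).re = ∑ i, (ω x (ei i)).re * (ω x (ei i)).im :=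
      Finset.sum_congr rfl fun i _ => mul_comm _ _
    have h3 : ∀ v w, fderiv ℝ P x v w = (fderiv ℝ ω x v w).im :=
      (fderiv_comp_form Complex.imCLM (hωd x hx)).2
    simp only [h3, hSi, hPi]
    linarith
  -- the energy controls the density `dens`
  have hcmp : ∀ x ∈ slab (n + 1) N, dens σ S P x ≤ 6 * eDen ψ x := by
    intro x hx
    have h1 : gradSq ψ x = ‖ψ x‖ ^ 2 * (∑ i, S x (ei i) ^ 2 + ∑ i, P x (ei i) ^ 2) := by
      rw [gradSq, ← Finset.sum_add_distrib, Finset.mul_sum]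
      refine Finset.sum_congr rfl fun i _ => ?_
      rw [pd, (hψd x hx).fderiv, smul_apply, smul_eq_mul, norm_mul, mul_pow,
        ← Complex.normSq_eq_norm_sq (ω x _), Complex.normSq_apply, hSi, hPi]
      ring
    have h2 : 0 ≤ ∑ i, S x (ei i) ^ 2 + ∑ i, P x (ei i) ^ 2 := by positivity
    rw [eDen, h1, dens, hρ x (hscl hx)]
    nlinarith [mul_le_mul_of_nonneg_right (hr x (hscl hx)) h2, sq_nonneg (1 - ‖ψ x‖ ^ 2)]
  have heD0 : ∀ x, 0 ≤ eDen ψ x := fun x => by unfold eDen gradSq; positivity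
  set M := 6 * ∫ x in slab (n + 1) N, eDen ψ x with hMdef
  have hsubR := cube_subset_slabCl n N
  have hdi : ∀ R, IntegrableOn (dens σ S P) (cube (hw n N R)) := fun R =>
    (continuousOn_dens (hσc.mono (hsubR R)) (hSc.mono (hsubR R))
      (hPc.mono (hsubR R))).integrableOn_compact (isCompact_cube _)
  have hM : ∀ R : ℝ, 0 < R → ∫ x in cube (hw n N R), dens σ S P x ≤ M := by
    intro R _
    -- the faces of the box are negligible
    have hae : (cube (hw n N R) : Set (Ed (n + 1))) =ᵐ[volume]
        (cube (hw n N R) ∩ slab (n + 1) N : Set (Ed (n + 1))) := by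
      filter_upwards [ae_coord_ne (0 : Fin (n + 1)) (-(N : ℝ)),
        ae_coord_ne (0 : Fin (n + 1)) (N : ℝ)] with x h1 h2
      refine propext ⟨fun hx => ⟨hx, ?_⟩, fun hx => hx.1⟩
      exact (slab_or_bdry (hsubR R hx)).resolve_right fun h => h.elim h1 h2
    have hms : MeasurableSet (cube (hw n N R) ∩ slab (n + 1) N) :=
      (measurableSet_cube _).inter (slab_isOpen _ _).measurableSet
    rw [setIntegral_congr_set hae, hMdef, ← integral_const_mul]
    refine (setIntegral_mono_on ((hdi R).mono_set Set.inter_subset_left)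
      ((hen.mono_set Set.inter_subset_right).const_mul 6) hms fun x hx => hcmp x hx.2).trans ?_
    refine setIntegral_mono_set (hen.const_mul 6) (ae_of_all _ fun x => ?_)
      Set.inter_subset_right.eventuallyLE
    exact mul_nonneg (by norm_num) (heD0 x)
  have hk : k.im = 0 := by
    refine jump_eq_zero hN hn φ P k.im M hφc hPc hφd (fun x hx => by simp [hφ, hleft x hx])
      (fun x hx => by simp [hφ, hright x hx]) fun R hR => ?_
    refine le_trans (setIntegral_mono_on ?_ (hdi R) (measurableSet_cube _) fun x _ => ?_)
      (hM R hR)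
    · exact (((hPc.mono (hsubR R)).clm_apply continuousOn_const).pow 2).integrableOn_compact
        (isCompact_cube _)
    · have h1 : P x (ei 0) ^ 2 ≤ ∑ j, P x (ei j) ^ 2 :=
        Finset.single_le_sum (f := fun j => P x (ei j) ^ 2) (fun j _ => sq_nonneg _)
          (Finset.mem_univ 0)
      have h2 : 0 ≤ ∑ i, S x (ei i) ^ 2 := by positivity
      unfold dens
      linarith [sq_nonneg (1 - Real.exp (2 * σ x))]
  have hN0 : (0 : ℝ) ≤ N := Nat.cast_nonneg N
  have hbdry : ∀ x : Ed (n + 1), |x 0| = (N : ℝ) → x 0 = -(N : ℝ) ∨ x 0 = N := fun x hx => by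
    rcases abs_cases (x 0) with h | h
    · right; linarith
    · left; linarith
  have hφb : ∀ x : Ed (n + 1), |x 0| = (N : ℝ) → φ x = 0 := fun x hx => by
    rcases hbdry x hx with h | h
    · simp [hφ, hleft x h]
    · simp [hφ, hright x h, hk]
  have hσb : ∀ x : Ed (n + 1), |x 0| = (N : ℝ) → σ x = 0 := fun x hx => by
    have hxs : x ∈ slabCl (n + 1) N := abs_le.1 hx.le
    have h1 := hρ x hxs
    rw [hbd x (hbdry x hx), norm_one, one_pow, Real.exp_eq_one_iff] at h1
    linarith
  have hzero := dens_eq_zero hσc hφc hSc hPc hσd hφd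
    (fun x hx => (fderiv_comp_form Complex.reCLM (hωd x hx)).1)
    (fun x hx => (fderiv_comp_form Complex.imCLM (hωd x hx)).1) eqS eqP hσb hφb hc0 hc2 hε
    (fun x hx => by rw [hρ x hx]; exact hlow x hx) (fun x hx => by rw [hρ x hx]; exact hup x hx) hM
  have hpart : ∀ x ∈ slab (n + 1) N, ‖ψ x‖ ^ 2 = 1 ∧ ω x = 0 := by
    intro x hx
    have h0 := hzero x hx
    have h1 : 0 ≤ ∑ i, S x (ei i) ^ 2 := by positivity
    have h2 : 0 ≤ ∑ i, P x (ei i) ^ 2 := by positivity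
    have h3 := sq_nonneg (1 - Real.exp (2 * σ x))
    unfold dens at h0
    have hs := (Finset.sum_eq_zero_iff_of_nonneg fun i _ => sq_nonneg (S x (ei i))).1
      (show ∑ i, S x (ei i) ^ 2 = 0 by linarith)
    have hp := (Finset.sum_eq_zero_iff_of_nonneg fun i _ => sq_nonneg (P x (ei i))).1
      (show ∑ i, P x (ei i) ^ 2 = 0 by linarith)
    have h4 : 1 - Real.exp (2 * σ x) = 0 := pow_eq_zero_iff two_ne_zero |>.1 (by linarith)
    refine ⟨by rw [← hρ x (hscl hx)]; linarith, ?_⟩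
    refine ContinuousLinearMap.coe_injective
      ((EuclideanSpace.basisFun (Fin (n + 1)) ℝ).toBasis.ext fun i => ?_)
    have h5 := pow_eq_zero_iff two_ne_zero |>.1 (hs i (Finset.mem_univ i))
    have h6 := pow_eq_zero_iff two_ne_zero |>.1 (hp i (Finset.mem_univ i))
    have h7 : ω x (ei i) = 0 := Complex.ext h5 h6
    simpa using h7
  refine fun hnt => hnt ⟨ψ 0, ?_, fun x hx => ?_⟩
  · exact (pow_eq_one_iff_of_nonneg (norm_nonneg _) two_ne_zero).1 (hpart 0 (zero_mem_slab _ hN)).1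
  · refine (slab_convex (n + 1) N).is_const_of_fderivWithin_eq_zero (𝕜 := ℝ)
      (fun y hy => (hψd y hy).differentiableAt.differentiableWithinAt) (fun y hy => ?_) hx
      (zero_mem_slab _ hN)
    rw [fderivWithin_of_isOpen (slab_isOpen _ _) hy, (hψd y hy).fderiv, (hpart y hy).2]
    ext v; simp

/-- a nontrivial finite energy solution of the slab problem cannot be
uniformly close to modulus 1: `sup |1 - |ψ|| ≥ (2/5)(1 - c/√2)`. -/
theorem statement9 (d N : ℕ) [NeZero d] (hd : d = 2 ∨ d = 3) (c : ℝ)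
    (hc0 : 0 < c) (hc2 : c < Real.sqrt 2) (ψ : Ed d → ℂ)
    (hsol : SlabSolution d N c ψ) (hnt : SlabNontriv d N ψ) :
    2 / 5 * (1 - c / Real.sqrt 2) ≤ sSup ((fun x => |1 - ‖ψ x‖|) '' slab d N) := by
  obtain ⟨n, rfl, hn⟩ : ∃ n, d = n + 1 ∧ 0 < n := ⟨d - 1, by omega, by omega⟩
  rcases Nat.eq_zero_or_pos N with rfl | hN
  -- for `N = 0` the slab is empty, so every `ψ` is trivial there
  · exact absurd ⟨1, norm_one, fun x hx => by
      have h1 := hx.1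
      have h2 := hx.2
      simp only [Nat.cast_zero, neg_zero] at h1 h2
      linarith⟩ hnt
  by_contra! hlt
  -- boundedness makes the supremum a genuine one, so that `hlt` gives pointwise bounds
  have hbdd : BddAbove ((fun x => |1 - ‖ψ x‖|) '' slab (n + 1) N) := by
    refine ⟨1 + (1 + c ^ 2 / 4 + (12 + 2 * (n + 1 : ℕ))), ?_⟩
    rintro _ ⟨x, hx, rfl⟩
    have h1 := hsol.bounded hx
    have h2 := norm_nonneg (ψ x)
    have h3 : ‖ψ x‖ ≤ 1 + ‖ψ x‖ ^ 2 := by nlinarith [sq_nonneg (‖ψ x‖ - 1)]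
    have h4 := sq_nonneg ‖ψ x‖
    refine abs_le.2 ⟨?_, ?_⟩ <;> linarith
  have hs2 : 0 < Real.sqrt 2 := by positivity
  have hsq : Real.sqrt 2 ^ 2 = 2 := Real.sq_sqrt (by norm_num)
  set t := c / Real.sqrt 2 with ht
  have ht0 : 0 < t := by positivity
  have ht1 : t < 1 := (div_lt_one hs2).2 hc2
  have hct : c ^ 2 = 2 * t ^ 2 := by rw [ht, div_pow, hsq]; ring
  have hmod : ∀ x ∈ slabCl (n + 1) N, |1 - ‖ψ x‖| ≤ 2 / 5 * (1 - t) := by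
    intro x hx
    rcases slab_or_bdry hx with h | h
    · exact (le_csSup hbdd ⟨x, h, rfl⟩).trans hlt.le
    · rw [hsol.2.2.1 x h]
      simp; linarith
  -- `3(1 - 2s/5)² - 1 - 2(1 - s)² = (8/5)s - (38/25)s² > 0` for `s = 1 - t`
  refine trivial_of_modulus hN hn hc0.le (by nlinarith)
    (ε := 8 / 5 * (1 - t) - 38 / 25 * (1 - t) ^ 2) (by nlinarith) hsol (fun x hx => ?_)
    (fun x hx => ?_) hnt
  · have h1 := (abs_le.1 (hmod x hx)).2
    rw [hct]
    nlinarith [mul_self_le_mul_self (show 0 ≤ 1 - 2 / 5 * (1 - t) by linarith)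
      (show 1 - 2 / 5 * (1 - t) ≤ ‖ψ x‖ by linarith)]
  · have h1 := (abs_le.1 (hmod x hx)).1
    nlinarith [norm_nonneg (ψ x)]
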